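/- arXiv:0906.3146 — 14 statements merged into one kernel-verified Lean document; each statement's English description precedes it below -/
import Mathlib

section
/- Let p be a prime number and let B be a commutative ring of characteristic p which is finitely generated as an algebra over the field F_p = ZMod p. Suppose there is an integer n ≥ 1 such that x^(p^n) = x for every x ∈ B (i.e. the n-th iterate of the Frobenius endomorphism of B is the identity). Then there exist a finite index type ι and a family of fields F_i (i ∈ ι), each finite of cardinality at most p^n, such that B is isomorphic as a ring to the product ∏_{i∈ι} F_i. -/
/-! Every element of `B` is a root of the monic polynomial `X ^ p ^ n - X`, so the finitely generated
`𝔽_p`-algebra `B` is integral, hence finite, over `𝔽_p`, and therefore Artinian. It is also reduced,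
since a nilpotent element is killed by a high iterate of the Frobenius map `x ↦ x ^ p ^ n = x`.
By the Chinese remainder theorem `B` is the product of its residue fields. Each residue field is a
finite extension of `𝔽_p`, thus a Galois field, and its elements are all roots of `X ^ p ^ n - X`,
so there are at most `p ^ n` of them. -/

theorem isReduced_of_pow_eq_self {B : Type*} [CommRing B] {q : ℕ} (hq : 1 < q)
    (h : ∀ x : B, x ^ q = x) : IsReduced B := by
  refine ⟨fun x ⟨m, hm⟩ => ?_⟩
  have key : ∀ k : ℕ, x ^ q ^ k = x := fun k => by
    induction k with
    | zero => simp
    | succ k ih => rw [pow_succ, pow_mul, ih, h]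
  rw [← key m]
  exact pow_eq_zero_of_le (Nat.lt_pow_self hq).le hm

theorem natCard_le_of_pow_eq_self {K : Type*} [Field K] {q : ℕ} (hq : 1 < q)
    (h : ∀ x : K, x ^ q = x) : Nat.card K ≤ q := by
  classical
  have h0 : (Polynomial.X ^ q - Polynomial.X : Polynomial K) ≠ 0 :=
    FiniteField.X_pow_card_sub_X_ne_zero K hq
  have hsub : (Set.univ : Set K) ⊆ (Polynomial.X ^ q - Polynomial.X : Polynomial K).roots.toFinset :=
    fun x _ => by simp [h0, h x]
  calc Nat.card K = (Set.univ : Set K).ncard := (Set.ncard_univ K).symm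
    _ ≤ (Polynomial.X ^ q - Polynomial.X : Polynomial K).roots.toFinset.card := by
      rw [← Set.ncard_coe_finset]
      exact Set.ncard_le_ncard hsub (Finset.finite_toSet _)
    _ ≤ (Polynomial.X ^ q - Polynomial.X : Polynomial K).natDegree :=
      (Multiset.toFinset_card_le _).trans (Polynomial.card_roots' _)
    _ = q := FiniteField.X_pow_card_sub_X_natDegree_eq K hq

/-- Let `p` be a prime and `B` a commutative ring of characteristic `p`
which is finitely generated as an algebra over `ZMod p`.  If there is `n ≥ 1` with
`x ^ (p ^ n) = x` for all `x ∈ B` (the `n`-th iterate of Frobenius is the identity), then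
`B` is isomorphic as a ring to a finite product of finite fields, each of cardinality at
most `p ^ n` (i.e. of degree at most `n` over `F_p`). -/
theorem stmt_0 (p : ℕ) [hp : Fact p.Prime] (B : Type) [CommRing B] [CharP B p]
    [Algebra (ZMod p) B] (hfg : Algebra.FiniteType (ZMod p) B)
    (n : ℕ) (hn : 1 ≤ n) (hfrob : ∀ x : B, x ^ p ^ n = x) :
    ∃ (ι : Type) (_ : Fintype ι) (d : ι → ℕ),
      (∀ i, 1 ≤ d i ∧ Nat.card (GaloisField p (d i)) ≤ p ^ n) ∧
        Nonempty (B ≃+* ∀ i, GaloisField p (d i)) := by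
  have hq : 1 < p ^ n := Nat.one_lt_pow (by omega) hp.out.one_lt
  have : IsReduced B := isReduced_of_pow_eq_self hq hfrob
  have : Algebra.IsIntegral (ZMod p) B := ⟨fun x =>
    ⟨Polynomial.X ^ p ^ n - Polynomial.X,
      Polynomial.monic_X_pow_sub (by rw [Polynomial.degree_X]; exact_mod_cast hq), by simp [hfrob x]⟩⟩
  have : Module.Finite (ZMod p) B := Algebra.IsIntegral.finite
  have : IsArtinianRing B := IsArtinianRing.of_finite (ZMod p) B
  let (I : MaximalSpectrum B) : Field (B ⧸ I.asIdeal) := Ideal.Quotient.field _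
  let d (I : MaximalSpectrum B) : ℕ := Module.finrank (ZMod p) (B ⧸ I.asIdeal)
  have hd (I : MaximalSpectrum B) : 1 ≤ d I := Module.finrank_pos
  have hcard (I : MaximalSpectrum B) : Nat.card (B ⧸ I.asIdeal) = p ^ d I := by
    rw [Module.natCard_eq_pow_finrank (K := ZMod p), Nat.card_zmod]
  have e (I : MaximalSpectrum B) : (B ⧸ I.asIdeal) ≃ₐ[ZMod p] GaloisField p (d I) :=
    GaloisField.algEquivGaloisField p (d I) (hcard I)
  refine ⟨MaximalSpectrum B, Fintype.ofFinite _, d, fun I => ⟨hd I, ?_⟩,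
    ⟨(IsArtinianRing.equivPi B).toRingEquiv.trans
      (RingEquiv.piCongrRight fun I => (e I).toRingEquiv)⟩⟩
  rw [← Nat.card_congr (e I).toEquiv]
  refine natCard_le_of_pow_eq_self hq fun x => ?_
  obtain ⟨y, rfl⟩ := Ideal.Quotient.mk_surjective x
  rw [← map_pow, hfrob]
end

section
/- Let A be a commutative ring which is torsion-free as a ℤ-module and finitely generated as a ℤ-algebra, equipped with a family (ψ_p) of pairwise commuting ring endomorphisms, indexed by the prime numbers p, such that ψ_p(x) − x^p ∈ pA for all x ∈ A. Suppose there are infinitely many primes p for which some iterate ψ_p^m (m ≥ 1) is the identity map of A. Then ℚ ⊗_ℤ A is a finite-dimensional ℚ-vector space, and A/pA is a finite ring for every prime p. -/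
/-!
The key point is that every `a : A` is algebraic over `ℤ`. If `a` were transcendental,
`ℤ[X] → A`, `X ↦ a`, would be injective and of finite presentation, so by Chevalley's theorem
the image of `Spec A → Spec ℤ[X]` would contain `D(r)` for some `r ≠ 0`
(`exists_forall_mem_range_comap`). For a large periodic prime `p` with `ψ_p^m = id`, the prime
`pℤ[X]` lies in `D(r)`, hence is the contraction of a prime `Q` of `A` containing `p`. But
`ψ_p^m = id` and the Frobenius congruence give `a ^ (p ^ m) ≡ a` modulo `pA ⊆ Q`, hence
`X - X ^ (p ^ m) ∈ pℤ[X]`, which is absurd (`isAlgebraic_of_periodic`).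

Algebraicity gives both conclusions, as an integral algebra of finite type is finite. It makes
`ℚ ⊗ A` integral over `ℚ`. As `A` is torsion-free, each `a` is moreover killed by a primitive
integer polynomial, whose reduction modulo any prime `p` is nonzero, so `A / pA` is integral
over `𝔽_p`.
-/

open scoped TensorProduct
open Polynomial

/-- A dominant morphism of finite presentation to an integral affine scheme has in its image a
nonempty basic open subset `D(r)`. -/
theorem exists_forall_mem_range_comap {R S : Type*} [CommRing R] [IsDomain R] [CommRing S]
    {f : R →+* S} (hf : f.FinitePresentation) (hinj : Function.Injective f) :
    ∃ r : R, r ≠ 0 ∧ ∀ P : PrimeSpectrum R, r ∉ P.asIdeal →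
      P ∈ Set.range (PrimeSpectrum.comap f) := by
  obtain ⟨D, hD⟩ := PrimeSpectrum.exists_constructibleSetData_iff.mpr
    (PrimeSpectrum.isConstructible_range_comap hf)
  obtain ⟨Q, hQ, hQ0⟩ := Ideal.exists_comap_eq_of_mem_minimalPrimes_of_injective hinj ⊥
    (by rw [IsDomain.minimalPrimes_eq_singleton_bot]; rfl)
  have h0 : (⊥ : PrimeSpectrum R) ∈ Set.range (PrimeSpectrum.comap f) :=
    ⟨⟨Q, hQ⟩, PrimeSpectrum.ext hQ0⟩
  rw [← hD] at h0
  -- The piece `V(g) \ V(f)` of the image through the generic point has `g = 0` and `f ≠ 0`.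
  simp only [PrimeSpectrum.ConstructibleSetData.toSet, Set.mem_iUnion] at h0
  obtain ⟨C, hC, hg, hr⟩ := h0
  refine ⟨C.f, fun h => hr (by simp [h]), fun P hP => ?_⟩
  rw [← hD]
  simp only [PrimeSpectrum.ConstructibleSetData.toSet, Set.mem_iUnion]
  refine ⟨C, hC, ?_, by simpa using hP⟩
  rintro _ ⟨i, rfl⟩
  have : C.g i = 0 := hg ⟨i, rfl⟩
  simp [this]

theorem isAlgebraic_of_periodic (A : Type*) [CommRing A] [Algebra.FiniteType ℤ A]
    (ψ : ℕ → A →+* A)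
    (hfrob : ∀ p : ℕ, p.Prime → ∀ x : A, ψ p x - x ^ p ∈ Ideal.span {(p : A)})
    (hper : {p : ℕ | p.Prime ∧ ∃ m : ℕ, 1 ≤ m ∧ (⇑(ψ p))^[m] = id}.Infinite) (a : A) :
    IsAlgebraic ℤ a := by
  by_contra ha
  have hinj : Function.Injective (aeval a : ℤ[X] →ₐ[ℤ] A) :=
    transcendental_iff_injective.mp ha
  have hft : (aeval a : ℤ[X] →ₐ[ℤ] A).toRingHom.FiniteType := by
    refine RingHom.FiniteType.of_comp_finiteType (f := algebraMap ℤ ℤ[X]) ?_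
    rw [AlgHom.toRingHom_eq_coe, AlgHom.comp_algebraMap]
    exact RingHom.finiteType_algebraMap.mpr inferInstance
  obtain ⟨r, hr0, hr⟩ := exists_forall_mem_range_comap
    (RingHom.FinitePresentation.of_finiteType.mp hft) hinj
  -- Such a `p` cannot divide the leading coefficient of `r`, so `r ∉ pℤ[X]`.
  obtain ⟨p, ⟨hp, m, hm, hid⟩, hlt⟩ := hper.exists_gt r.leadingCoeff.natAbs
  have hpr : _root_.Prime (p : ℤ) := Nat.prime_iff_prime_int.mp hp
  let P : PrimeSpectrum ℤ[X] := ⟨Ideal.span {C (p : ℤ)},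
    (Ideal.span_singleton_prime (C_ne_zero.mpr hpr.ne_zero)).mpr (prime_C_iff.mpr hpr)⟩
  have hmem (q : ℤ[X]) : q ∈ P.asIdeal ↔ ∀ i, (p : ℤ) ∣ q.coeff i := by
    rw [← C_dvd_iff_dvd_coeff]; exact Ideal.mem_span_singleton
  obtain ⟨Q, hQ⟩ := hr P fun h => by
    have h1 := Int.natAbs_dvd_natAbs.mpr ((hmem r).mp h r.natDegree)
    have := Nat.le_of_dvd (Int.natAbs_pos.mpr (leadingCoeff_ne_zero.mpr hr0)) h1
    simp at this
    omega
  have hQ' (q : ℤ[X]) : aeval a q ∈ Q.asIdeal ↔ q ∈ P.asIdeal := by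
    rw [← hQ]; rfl
  have hpQ : Ideal.span {(p : A)} ≤ Q.asIdeal := by
    rw [Ideal.span_singleton_le_iff_mem]
    have := (hQ' (C (p : ℤ))).mpr (Ideal.mem_span_singleton_self _)
    simpa using this
  have hit (k : ℕ) : (ψ p)^[k] a - a ^ p ^ k ∈ Ideal.span {(p : A)} := by
    induction k with
    | zero => simp
    | succ k ih =>
      rw [Function.iterate_succ_apply']
      have h1 := hfrob p hp ((ψ p)^[k] a)
      have h2 := (Ideal.span {(p : A)}).mem_of_dvd (sub_dvd_pow_sub_pow ((ψ p)^[k] a) (a ^ p ^ k) p) ih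
      rw [← pow_mul, ← pow_succ] at h2
      simpa using add_mem h1 h2
  have h1 := hpQ (hit m)
  rw [hid] at h1
  have h2 : aeval a (X - X ^ p ^ m : ℤ[X]) ∈ Q.asIdeal := by simpa using h1
  -- Compare coefficients of `X`.
  have h3 := (hmem _).mp ((hQ' _).mp h2) 1
  have : 1 ≠ p ^ m := (Nat.one_lt_pow (by omega) hp.one_lt).ne
  simp only [coeff_sub, coeff_X_one, coeff_X_pow, this, if_false, sub_zero] at h3
  exact hpr.not_isUnit (isUnit_of_dvd_one h3)

theorem finite_rat_tensor (A : Type*) [CommRing A] [Algebra.FiniteType ℤ A]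
    (h : ∀ a : A, IsAlgebraic ℤ a) : Module.Finite ℚ (ℚ ⊗[ℤ] A) := by
  have : Algebra.IsIntegral ℚ (ℚ ⊗[ℤ] A) := ⟨fun x => by
    induction x with
    | zero => exact isIntegral_zero
    | add x y hx hy => exact hx.add hy
    | tmul q a =>
      obtain ⟨f, hf0, hf⟩ := h a
      have h1 : IsAlgebraic ℚ ((1 : ℚ) ⊗ₜ[ℤ] a) := by
        refine ⟨f.map (algebraMap ℤ ℚ), (Polynomial.map_ne_zero_iff Int.cast_injective).mpr hf0, ?_⟩
        rw [aeval_map_algebraMap]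
        have := aeval_algHom_apply (Algebra.TensorProduct.includeRight : A →ₐ[ℤ] ℚ ⊗[ℤ] A) a f
        rw [hf, map_zero] at this
        exact this
      have h2 := h1.isIntegral.smul q
      rwa [TensorProduct.smul_tmul', smul_eq_mul, mul_one] at h2⟩
  exact Algebra.IsIntegral.finite

theorem finite_quotient (A : Type*) [CommRing A] [NoZeroSMulDivisors ℤ A] [Algebra.FiniteType ℤ A]
    (h : ∀ a : A, IsAlgebraic ℤ a) (p : ℕ) (hp : p.Prime) :
    Finite (A ⧸ Ideal.span {(p : A)}) := by
  have := Fact.mk hp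
  let B := A ⧸ Ideal.span {(p : A)}
  have hpB : (p : B) = 0 := by
    have : Ideal.Quotient.mk (Ideal.span {(p : A)}) (p : A) = 0 :=
      Ideal.Quotient.eq_zero_iff_mem.mpr (Ideal.mem_span_singleton_self _)
    simpa using this
  let _ : Algebra (ZMod p) B := ((Ideal.Quotient.lift _ (Int.castRingHom B) (by
      intro a ha
      obtain ⟨b, rfl⟩ := Ideal.mem_span_singleton.mp ha
      simp [hpB])).comp (Int.quotientSpanNatEquivZMod p).symm.toRingHom).toAlgebra
  have : Algebra.FiniteType (ZMod p) B := Algebra.FiniteType.of_restrictScalars_finiteType ℤ _ _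
  have : Algebra.IsIntegral (ZMod p) B := ⟨fun x => by
    obtain ⟨a, rfl⟩ := Ideal.Quotient.mk_surjective x
    obtain ⟨f, hf0, hf⟩ := h a
    have hg : aeval a f.primPart = 0 := by
      rw [f.eq_C_content_mul_primPart, map_mul, aeval_C, ← Algebra.smul_def] at hf
      exact (smul_eq_zero.mp hf).resolve_left (content_eq_zero_iff.not.mpr hf0)
    refine IsAlgebraic.isIntegral ⟨f.primPart.map (algebraMap ℤ (ZMod p)), fun h0 => ?_, ?_⟩
    · have : C (p : ℤ) ∣ f.primPart := by
        rw [C_dvd_iff_dvd_coeff]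
        intro i
        have := congrArg (coeff · i) h0
        simpa [ZMod.intCast_zmod_eq_zero_iff_dvd] using this
      exact (Nat.prime_iff_prime_int.mp hp).not_isUnit (f.isPrimitive_primPart _ this)
    · rw [aeval_map_algebraMap]
      have := aeval_algHom_apply (Ideal.Quotient.mkₐ ℤ (Ideal.span {(p : A)})) a f.primPart
      rw [hg, map_zero] at this
      exact this⟩
  have : Module.Finite (ZMod p) B := Algebra.IsIntegral.finite
  exact Module.finite_of_finite (ZMod p)

/-- Let `A` be a commutative ring, torsion-free as a `ℤ`-module and
finitely generated as a `ℤ`-algebra, equipped with a family `ψ p` of pairwise commuting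
ring endomorphisms, indexed by the primes `p`, with `ψ p x - x ^ p ∈ p • A`.  If there are
infinitely many periodic primes (primes `p` such that some iterate `ψ p ^[m]`, `m ≥ 1`, is
the identity), then `ℚ ⊗[ℤ] A` is a finite-dimensional `ℚ`-vector space and `A ⧸ pA` is a
finite ring for every prime `p`. -/
theorem stmt_1 (A : Type) [CommRing A] [NoZeroSMulDivisors ℤ A]
    (hfg : Algebra.FiniteType ℤ A)
    (ψ : ℕ → A →+* A)
    (hcomm : ∀ p q : ℕ, p.Prime → q.Prime → (ψ p).comp (ψ q) = (ψ q).comp (ψ p))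
    (hfrob : ∀ p : ℕ, p.Prime → ∀ x : A, ψ p x - x ^ p ∈ Ideal.span {(p : A)})
    (hper : {p : ℕ | p.Prime ∧ ∃ m : ℕ, 1 ≤ m ∧ (⇑(ψ p))^[m] = id}.Infinite) :
    Module.Finite ℚ (ℚ ⊗[ℤ] A) ∧
      ∀ p : ℕ, p.Prime → Finite (A ⧸ Ideal.span {(p : A)}) := by
  have halg := isAlgebraic_of_periodic A ψ hfrob hper
  exact ⟨finite_rat_tensor A halg, finite_quotient A halg⟩
end

section
/- Let A and B be commutative rings, each torsion-free as a ℤ-module and finitely generated as a ℤ-algebra, equipped with families (ψ_p^A) and (ψ_p^B) of pairwise commuting ring endomorphisms indexed by the primes p satisfying ψ_p^A(x) − x^p ∈ pA and ψ_p^B(y) − y^p ∈ pB for all x ∈ A, y ∈ B. Assume A is reduced and there are infinitely many primes p for which some iterate (ψ_p^A)^m (m ≥ 1) is the identity of A. Then the set of ring homomorphisms φ : B → A satisfying φ ∘ ψ_p^B = ψ_p^A ∘ φ for all primes p is finite. -/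
/-!
Fix a periodic prime `p`, with `ψ_p ^ m = id` on `A`.

* The quotient `A / pA` is finite: since `ψ_p ^ m` lifts the `p ^ m`-power map, every element of
  `A / pA` satisfies `x ^ (p ^ m) = x`, so `A / pA` is integral and of finite type over `ℤ`, hence
  a finitely generated abelian group, and it is killed by `p` (`finite_quotient_of_periodic`).
* Let `φ, φ' : B → A` commute with `ψ_p` and agree modulo `p`. They then agree modulo every
  `p ^ k` (`congr_pow_of_congr`). Write `ψ_p b = b ^ p + p c`; if `φ ≡ φ'` modulo `p ^ k`, then
  `φ b ^ p ≡ φ' b ^ p` and `p φ c ≡ p φ' c` modulo `p ^ (k + 1)`, so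
  `ψ_p (φ b) ≡ ψ_p (φ' b)` modulo `p ^ (k + 1)`, and applying `ψ_p ^ (m - 1)` gives
  `φ b ≡ φ' b` modulo `p ^ (k + 1)`.

If `A` is moreover `p`-adically separated, then `φ` is determined by the images in the finite ring
`A / pA` of finitely many generators of `B`, and the claim follows. A prime at which `A` is not
separated is, by Krull's intersection theorem, invertible in `A / P` for some associated prime `P`
of `A`. There are finitely many such `P`, and each `A / P` is a domain of characteristic zero and of
finite type over `ℤ`, in which only finitely many primes are invertible
(`finite_primes_isUnit`). So some periodic prime has the required separation property.
-/

/-- A homomorphism from `D`, a ring of finite type over `ℤ`, to an algebraic extension of `ℚ` has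
denominators dividing powers of a single nonzero integer `n`. -/
lemma exists_common_denominator {D K : Type*} [CommRing D] [Field K] [Algebra ℚ K]
    [Algebra.IsAlgebraic ℚ K] [Algebra.FiniteType ℤ D] (f : D →+* K) :
    ∃ n : ℤ, n ≠ 0 ∧ ∀ d : D, ∃ k : ℕ, IsIntegral ℤ ((n : K) ^ k * f d) := by
  obtain ⟨S, hS⟩ := (inferInstance : Algebra.FiniteType ℤ D).out
  have key : ∀ z : K, ∃ y : ℤ, y ≠ 0 ∧ IsIntegral ℤ ((y : K) * z) := by
    intro z
    have hz : IsAlgebraic ℤ z :=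
      (IsFractionRing.isAlgebraic_iff ℤ ℚ K).2 (Algebra.IsAlgebraic.isAlgebraic z)
    obtain ⟨y, hy, h⟩ := hz.exists_integral_multiple
    exact ⟨y, hy, by simpa [zsmul_eq_mul] using h⟩
  choose y hy0 hy using key
  refine ⟨∏ g ∈ S, y (f g), Finset.prod_ne_zero_iff.2 fun g _ => hy0 _, fun d => ?_⟩
  set n : ℤ := ∏ g ∈ S, y (f g) with hn
  have hint : ∀ k : ℕ, IsIntegral ℤ ((n : K) ^ k) := fun k => by
    have := isIntegral_algebraMap (R := ℤ) (A := K) (x := n ^ k)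
    simpa using this
  have hd : d ∈ Algebra.adjoin ℤ (S : Set D) := by rw [hS]; trivial
  induction hd using Algebra.adjoin_induction with
  | mem x hx =>
    refine ⟨1, ?_⟩
    obtain ⟨c, hc⟩ := Finset.dvd_prod_of_mem (fun g => y (f g)) (Finset.mem_coe.1 hx)
    have hc' : IsIntegral ℤ ((c : ℤ) : K) := isIntegral_algebraMap (R := ℤ) (A := K) (x := c)
    have : (n : K) ^ 1 * f x = (c : K) * ((y (f x) : K) * f x) := by
      rw [hn, hc]; push_cast; ring
    rw [this]
    exact hc'.mul (hy _)
  | algebraMap r =>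
    refine ⟨0, ?_⟩
    have := isIntegral_algebraMap (R := ℤ) (A := K) (x := r)
    simpa using this
  | add x z _ _ hx hz =>
    obtain ⟨k, hk⟩ := hx
    obtain ⟨l, hl⟩ := hz
    refine ⟨k + l, ?_⟩
    have : (n : K) ^ (k + l) * f (x + z)
        = (n : K) ^ l * ((n : K) ^ k * f x) + (n : K) ^ k * ((n : K) ^ l * f z) := by
      rw [map_add]; ring
    rw [this]
    exact ((hint l).mul hk).add ((hint k).mul hl)
  | mul x z _ _ hx hz =>
    obtain ⟨k, hk⟩ := hx
    obtain ⟨l, hl⟩ := hz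
    refine ⟨k + l, ?_⟩
    have : (n : K) ^ (k + l) * f (x * z) = ((n : K) ^ k * f x) * ((n : K) ^ l * f z) := by
      rw [map_mul]; ring
    rw [this]
    exact hk.mul hl

/-- A prime invertible in `D` divides the common denominator of the image of `D` in `K`. -/
lemma finite_primes_isUnit_of_ringHom {D K : Type*} [CommRing D] [Field K] [Algebra ℚ K]
    [Algebra.IsAlgebraic ℚ K] [Algebra.FiniteType ℤ D] (f : D →+* K) :
    {p : ℕ | p.Prime ∧ IsUnit (p : D)}.Finite := by
  obtain ⟨n, hn0, hn⟩ := exists_common_denominator f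
  refine (n.natAbs.primeFactors.finite_toSet).subset ?_
  rintro p ⟨hp, hu⟩
  obtain ⟨d, hd⟩ := hu.exists_right_inv
  obtain ⟨k, hk⟩ := hn d
  have : CharZero K := algebraRat.charZero _
  have hpd : (p : K) * f d = 1 := by
    rw [← map_natCast f, ← map_mul, hd, map_one]
  have hp0 : (p : ℚ) ≠ 0 := by exact_mod_cast hp.ne_zero
  have hp0' : (p : K) ≠ 0 := by exact_mod_cast hp.ne_zero
  have hq : (n : K) ^ k * f d = algebraMap ℚ K ((n : ℚ) ^ k / p) := by
    rw [map_div₀, map_pow, map_intCast, map_natCast, eq_div_iff hp0', mul_assoc, mul_comm (f d),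
      hpd, mul_one]
  rw [hq] at hk
  have hk' : IsIntegral ℤ ((n : ℚ) ^ k / p) :=
    (isIntegral_algebraMap_iff (algebraMap ℚ K).injective).1 hk
  obtain ⟨z, hz⟩ := IsIntegrallyClosed.isIntegral_iff.1 hk'
  have hz' : (p : ℤ) * z = n ^ k := by
    rw [eq_div_iff hp0] at hz
    have : ((p : ℤ) * z : ℚ) = (n : ℚ) ^ k := by rw [← hz, mul_comm]; simp
    exact_mod_cast this
  have hdvd : (p : ℤ) ∣ n := (Nat.prime_iff_prime_int.1 hp).dvd_of_dvd_pow ⟨z, hz'.symm⟩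
  simp only [Finset.mem_coe, Nat.mem_primeFactors]
  exact ⟨hp, Int.natCast_dvd.1 hdvd, by simpa using hn0⟩

/-- Only finitely many primes are invertible in a domain of characteristic zero and of finite type
over `ℤ`, since such a domain maps to a number field by Zariski's lemma. -/
lemma finite_primes_isUnit (D : Type*) [CommRing D] [IsDomain D] [CharZero D]
    [Algebra.FiniteType ℤ D] : {p : ℕ | p.Prime ∧ IsUnit (p : D)}.Finite := by
  have hinjQ : Function.Injective (algebraMap ℤ ℚ) := (algebraMap ℤ ℚ).injective_int
  have hinjD : Function.Injective (algebraMap ℤ D) := (algebraMap ℤ D).injective_int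
  have : Nontrivial (TensorProduct ℤ ℚ D) :=
    Algebra.TensorProduct.nontrivial_of_algebraMap_injective_of_isDomain ℤ ℚ D hinjQ hinjD
  obtain ⟨m, hm⟩ := Ideal.exists_maximal (TensorProduct ℤ ℚ D)
  let := Ideal.Quotient.field m
  have := finite_of_finite_type_of_isJacobsonRing ℚ (TensorProduct ℤ ℚ D ⧸ m)
  exact finite_primes_isUnit_of_ringHom ((Ideal.Quotient.mk m).comp
    (Algebra.TensorProduct.includeRight : D →ₐ[ℤ] TensorProduct ℤ ℚ D).toRingHom)

/-- A torsion-free ring of finite type over `ℤ` is `p`-adically separated for all but finitely many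
primes `p`. -/
lemma finite_primes_not_separated (A : Type*) [CommRing A] [NoZeroSMulDivisors ℤ A]
    [Algebra.FiniteType ℤ A] :
    {p : ℕ | p.Prime ∧ ∃ x : A, x ≠ 0 ∧ ∀ k : ℕ, (p : A) ^ k ∣ x}.Finite := by
  have : IsNoetherianRing A := Algebra.FiniteType.isNoetherianRing ℤ A
  have hfin : (⋃ P ∈ associatedPrimes A A, {p : ℕ | p.Prime ∧ IsUnit (p : A ⧸ P)}).Finite := by
    refine (associatedPrimes.finite A A).biUnion fun P hP => ?_
    have hPp : P.IsPrime := hP.isPrime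
    have : CharZero (A ⧸ P) := by
      rw [AssociatedPrimes.mem_iff, isAssociatedPrime_iff] at hP
      obtain ⟨-, x, hx⟩ := hP
      have hx0 : x ≠ 0 := by
        rintro rfl
        exact hPp.ne_top (by simp [hx])
      refine charZero_of_inj_zero fun n hn => ?_
      rw [← map_natCast (Ideal.Quotient.mk P), Ideal.Quotient.eq_zero_iff_mem, hx,
        Submodule.mem_colon_singleton] at hn
      have hn' : (n : ℤ) • x = 0 := by simpa using hn
      rcases eq_zero_or_eq_zero_of_smul_eq_zero hn' with h | h
      · exact_mod_cast h
      · exact absurd h hx0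
    -- The `ℤ`-algebra structure here is the one of a ring, not the one of a quotient of a
    -- `ℤ`-algebra.
    exact @finite_primes_isUnit (A ⧸ P) _ _ _ (Algebra.FiniteType.of_surjective
      (Ideal.Quotient.mk P).toIntAlgHom Ideal.Quotient.mk_surjective)
  refine hfin.subset ?_
  rintro p ⟨hp, x, hx0, hx⟩
  have hmem : x ∈ (⨅ i : ℕ, (Ideal.span {(p : A)}) ^ i • ⊤ : Submodule A A) := by
    rw [Submodule.mem_iInf]
    intro i
    rw [smul_eq_mul, Ideal.mul_top, Ideal.span_singleton_pow, Ideal.mem_span_singleton]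
    exact hx i
  obtain ⟨⟨r, hr⟩, hrx⟩ := (Ideal.mem_iInf_smul_pow_eq_bot_iff _ x).1 hmem
  obtain ⟨a, ha⟩ := Ideal.mem_span_singleton.1 hr
  have hz : (1 - r) ∈ ⋃ P ∈ associatedPrimes A A, (P : Set A) := by
    rw [biUnion_associatedPrimes_eq_zero_divisors]
    refine ⟨x, hx0, ?_⟩
    have : r * x = x := hrx
    rw [smul_eq_mul, sub_mul, this, one_mul, sub_self]
  simp only [Set.mem_iUnion] at hz ⊢
  obtain ⟨P, hP, h⟩ := hz
  refine ⟨P, hP, hp, .of_mul_eq_one (Ideal.Quotient.mk P a) ?_⟩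
  rw [← map_natCast (Ideal.Quotient.mk P), ← map_mul, ← ha, ← map_one (Ideal.Quotient.mk P)]
  exact (Ideal.Quotient.eq.2 h).symm

/-- The iterates of a Frobenius lift lift the iterates of Frobenius. -/
lemma iterate_frobeniusLift {A : Type*} [CommRing A] {p : ℕ} (ψ : A →+* A)
    (hψ : ∀ x, (p : A) ∣ ψ x - x ^ p) (m : ℕ) (x : A) : (p : A) ∣ ψ^[m] x - x ^ p ^ m := by
  induction m with
  | zero => simp
  | succ m ih =>
    rw [Function.iterate_succ_apply', pow_succ, pow_mul]
    have h := (hψ (ψ^[m] x)).add (ih.trans (sub_dvd_pow_sub_pow _ _ p))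
    simpa using h

lemma finite_quotient_of_periodic {A : Type*} [CommRing A] [Algebra.FiniteType ℤ A] {p : ℕ}
    (hp : p.Prime) (ψ : A →+* A) (hψ : ∀ x, (p : A) ∣ ψ x - x ^ p) {m : ℕ} (hm : 1 ≤ m)
    (hper : ψ^[m] = id) : Finite (A ⧸ Ideal.span {(p : A)}) := by
  have hpow : ∀ x : A ⧸ Ideal.span {(p : A)}, x ^ p ^ m = x := by
    intro x
    obtain ⟨x, rfl⟩ := Ideal.Quotient.mk_surjective x
    rw [← map_pow]
    refine (Ideal.Quotient.eq.2 (Ideal.mem_span_singleton.2 ?_)).symm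
    simpa [hper] using iterate_frobeniusLift ψ hψ m x
  have : Algebra.IsIntegral ℤ (A ⧸ Ideal.span {(p : A)}) := by
    refine ⟨fun x => ⟨Polynomial.X ^ p ^ m - Polynomial.X, ?_, by simp [hpow]⟩⟩
    refine Polynomial.monic_X_pow_sub (n := p ^ m) ?_
    rw [Polynomial.degree_X]
    exact_mod_cast Nat.one_lt_pow (by omega) hp.one_lt
  have : Module.Finite ℤ (A ⧸ Ideal.span {(p : A)}) := Algebra.IsIntegral.finite
  refine Module.finite_of_fg_torsion _ fun x => ?_
  refine ⟨⟨(p : ℤ), mem_nonZeroDivisors_of_ne_zero (by exact_mod_cast hp.ne_zero)⟩, ?_⟩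
  have h0 : ((p : A) : A ⧸ Ideal.span {(p : A)}) = 0 :=
    Ideal.Quotient.eq_zero_iff_mem.2 (Ideal.mem_span_singleton_self _)
  have h0' : (p : A ⧸ Ideal.span {(p : A)}) = 0 := by simpa using h0
  change (p : ℤ) • x = 0
  simp [h0']

/-- Two homomorphisms that commute with Frobenius lifts at `p`, periodic on the target, and agree
modulo `p` agree modulo all powers of `p`. -/
lemma congr_pow_of_congr {A B : Type*} [CommRing A] [CommRing B] {p : ℕ}
    (ψA : A →+* A) (ψB : B →+* B) (hψB : ∀ y, (p : B) ∣ ψB y - y ^ p) {m : ℕ} (hm : 1 ≤ m)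
    (hper : ψA^[m] = id) (φ φ' : B →+* A) (hφ : φ.comp ψB = ψA.comp φ)
    (hφ' : φ'.comp ψB = ψA.comp φ') (h : ∀ b, (p : A) ∣ φ b - φ' b) (k : ℕ) :
    ∀ b, (p : A) ^ (k + 1) ∣ φ b - φ' b := by
  induction k with
  | zero => simpa using h
  | succ k ih =>
    intro b
    obtain ⟨c, hc⟩ := hψB b
    have hψ : ψB b = b ^ p + p * c := by rw [← hc]; ring
    have h1 : (p : A) ^ (k + 2) ∣ φ b ^ p - φ' b ^ p := by
      -- `φ b = φ' b + p ^ (k + 1) * e`, and the binomial expansion gains one factor `p`.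
      obtain ⟨e, he⟩ := ih b
      rw [sub_eq_iff_eq_add'] at he
      obtain ⟨w, hw⟩ := Polynomial.powAddExpansion (φ' b) ((p : A) ^ (k + 1) * e) p
      rw [he, hw]
      rcases Nat.eq_zero_or_pos p with h0 | h0
      · subst h0
        simp
      · exact ⟨φ' b ^ (p - 1) * e + w * (p : A) ^ k * e ^ 2, by ring⟩
    have h2 : (p : A) ^ (k + 2) ∣ p * (φ c - φ' c) := by
      rw [pow_succ' _ (k + 1)]
      exact mul_dvd_mul_left _ (ih c)
    have h3 : (p : A) ^ (k + 2) ∣ ψA (φ b) - ψA (φ' b) := by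
      have e1 : ψA (φ b) = φ b ^ p + p * φ c := by
        rw [← RingHom.comp_apply, ← hφ, RingHom.comp_apply, hψ]; simp
      have e2 : ψA (φ' b) = φ' b ^ p + p * φ' c := by
        rw [← RingHom.comp_apply, ← hφ', RingHom.comp_apply, hψ]; simp
      rw [e1, e2, add_sub_add_comm, ← mul_sub]
      exact dvd_add h1 h2
    have h4 : ∀ j x, (p : A) ^ (k + 2) ∣ x → (p : A) ^ (k + 2) ∣ ψA^[j] x := by
      intro j
      induction j with
      | zero => exact fun x hx => hx
      | succ j ihj =>
        intro x hx
        rw [Function.iterate_succ_apply]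
        exact ihj _ (by simpa using map_dvd ψA hx)
    obtain ⟨j, rfl⟩ : ∃ j, m = j + 1 := ⟨m - 1, by omega⟩
    have h5 := h4 j _ h3
    rw [← map_sub, ← Function.iterate_succ_apply, hper] at h5
    exact h5

/-- Let `A` and `B` be commutative rings, torsion-free as `ℤ`-modules and
finitely generated as `ℤ`-algebras, each with a commuting family of Frobenius lifts
`ψA p`, `ψB p` indexed by the primes.  If `A` is reduced and has infinitely many periodic
primes, then the set of ring homomorphisms `B → A` commuting with the Frobenius lifts is
finite. -/
theorem stmt_2 (A B : Type) [CommRing A] [CommRing B]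
    [NoZeroSMulDivisors ℤ A] [NoZeroSMulDivisors ℤ B]
    (hfgA : Algebra.FiniteType ℤ A) (hfgB : Algebra.FiniteType ℤ B)
    (ψA : ℕ → A →+* A) (ψB : ℕ → B →+* B)
    (hcommA : ∀ p q : ℕ, p.Prime → q.Prime → (ψA p).comp (ψA q) = (ψA q).comp (ψA p))
    (hcommB : ∀ p q : ℕ, p.Prime → q.Prime → (ψB p).comp (ψB q) = (ψB q).comp (ψB p))
    (hfrobA : ∀ p : ℕ, p.Prime → ∀ x : A, ψA p x - x ^ p ∈ Ideal.span {(p : A)})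
    (hfrobB : ∀ p : ℕ, p.Prime → ∀ y : B, ψB p y - y ^ p ∈ Ideal.span {(p : B)})
    (hred : IsReduced A)
    (hper : {p : ℕ | p.Prime ∧ ∃ m : ℕ, 1 ≤ m ∧ (⇑(ψA p))^[m] = id}.Infinite) :
    {φ : B →+* A | ∀ p : ℕ, p.Prime → φ.comp (ψB p) = (ψA p).comp φ}.Finite := by
  obtain ⟨p, ⟨hp, m, hm, hpm⟩, hsep⟩ := (hper.sdiff (finite_primes_not_separated A)).nonempty
  have hsep' : ∀ x : A, (∀ k : ℕ, (p : A) ^ k ∣ x) → x = 0 := by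
    intro x hx
    by_contra h0
    exact hsep ⟨hp, x, h0, hx⟩
  have hfin : Finite (A ⧸ Ideal.span {(p : A)}) := finite_quotient_of_periodic hp (ψA p)
    (fun x => Ideal.mem_span_singleton.1 (hfrobA p hp x)) hm hpm
  obtain ⟨S, hS⟩ := hfgB.out
  refine Set.Finite.of_finite_image (f := fun φ : B →+* A => fun s : S =>
    Ideal.Quotient.mk (Ideal.span {(p : A)}) (φ s)) (Set.toFinite _) ?_
  intro φ hφ φ' hφ' heq
  have hmod : ((Ideal.Quotient.mk (Ideal.span {(p : A)})).comp φ).toIntAlgHom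
      = ((Ideal.Quotient.mk (Ideal.span {(p : A)})).comp φ').toIntAlgHom :=
    AlgHom.ext_of_adjoin_eq_top hS fun s hs => congrFun heq ⟨s, hs⟩
  have hcongr : ∀ b, (p : A) ∣ φ b - φ' b := fun b =>
    Ideal.mem_span_singleton.1 (Ideal.Quotient.eq.1 (DFunLike.congr_fun hmod b))
  ext b
  refine sub_eq_zero.1 (hsep' _ fun k => (pow_dvd_pow _ k.le_succ).trans ?_)
  exact congr_pow_of_congr (ψA p) (ψB p)
    (fun y => Ideal.mem_span_singleton.1 (hfrobB p hp y)) hm hpm φ φ' (hφ p hp) (hφ' p hp)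
    hcongr k b
end

section
/- Let A be a commutative ring, torsion-free as a ℤ-module and finitely generated as a ℤ-algebra, equipped with a family (ψ_p) of pairwise commuting ring endomorphisms indexed by the primes p satisfying ψ_p(x) − x^p ∈ pA for all x ∈ A. Fix an integer n ≥ 1, and for each prime p let Ψ_p denote the ring endomorphism of ℤ[x]/(x^n − 1) induced by x ↦ x^p. Then the set of ring homomorphisms φ : A → ℤ[x]/(x^n − 1) satisfying φ ∘ ψ_p = Ψ_p ∘ φ for all primes p is finite. -/
/-!
A `Λ`-map `φ` into `ℤ[x]/(x^n - 1)` kills every `ψ_p a - a` with `p ≡ 1 mod n`, because `Ψ_p` is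
the identity for such `p`. Hence it factors through the quotient `B` of `A` by the ideal generated
by these elements, and the Frobenius congruence gives `b ^ p - b ∈ pB` for all `b ∈ B` and all
primes `p ≡ 1 mod n`. Dirichlet's theorem for the residue class of `1` provides infinitely many
such primes.

This forces every `b ∈ B` to satisfy a nonzero integer polynomial
(`exists_aeval_eq_zero_of_frobenius`). Otherwise `ℤ[t] → B`, `t ↦ b`, is injective of finite
presentation, so by Chevalley's theorem the image of `Spec B` contains a nonempty basic open set
`D(r)` (`exists_basicOpen_subset_range_comap`). For large `p` the prime `pℤ[t]` lies in `D(r)`, so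
it is the contraction of a prime of `B`, which contains `p` and therefore `b ^ p - b`. Then
`t ^ p - t ∈ pℤ[t]`, which is absurd.

So for each `a ∈ A` there is a nonzero integer polynomial, independent of `φ`, having `φ a` as a
root. Since `ℤ[x]/(x^n - 1)` embeds in a finite product of copies of `ℂ` by evaluation at the
`n`-th roots of unity (`cycEval_injective`), `φ a` takes finitely many values, and `φ` is determined
by its values on a finite generating set of `A`.
-/

open Polynomial

/-- The ring `ℤ[x]/(x^n - 1)`. -/
noncomputable abbrev CycRing (n : ℕ) : Type :=
  Polynomial ℤ ⧸ Ideal.span {(X : Polynomial ℤ) ^ n - 1}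

/-- The toric Frobenius lift `Ψ_p` on `ℤ[x]/(x^n - 1)`, the ring endomorphism induced by
`x ↦ x ^ p`. -/
noncomputable def cycPsi (n p : ℕ) : CycRing n →+* CycRing n :=
  Ideal.quotientMap _ (Polynomial.aeval ((X : Polynomial ℤ) ^ p)).toRingHom
    (by
      rw [Ideal.span_le]
      rintro q rfl
      refine Ideal.mem_comap.mpr ?_
      rw [AlgHom.toRingHom_eq_coe, RingHom.coe_coe, map_sub, map_one, map_pow, aeval_X,
        ← pow_mul, mul_comm, pow_mul]
      exact Ideal.mem_span_singleton.mpr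
        (by simpa using sub_dvd_pow_sub_pow ((X : Polynomial ℤ) ^ n) 1 p))

/-- By Chevalley's theorem the image of `Spec f` is constructible; it contains the generic point
since `f` is injective, hence it contains a nonempty basic open set. -/
theorem exists_basicOpen_subset_range_comap {R S : Type*} [CommRing R] [IsDomain R] [CommRing S]
    {f : R →+* S} (hf : f.FinitePresentation) (hinj : Function.Injective f) :
    ∃ r : R, r ≠ 0 ∧ ∀ P : Ideal R, P.IsPrime → r ∉ P →
      ∃ Q : Ideal S, Q.IsPrime ∧ Q.comap f = P := by
  obtain ⟨T, hT⟩ := PrimeSpectrum.exists_constructibleSetData_iff.mpr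
    (PrimeSpectrum.isConstructible_range_comap hf)
  obtain ⟨Q₀, hQ₀, hQ₀c⟩ := Ideal.exists_comap_eq_of_mem_minimalPrimes_of_injective hinj
    (⊥ : Ideal R) (by rw [IsDomain.minimalPrimes_eq_singleton_bot]; rfl)
  have hgen : (⟨⊥, Ideal.isPrime_bot⟩ : PrimeSpectrum R) ∈ T.toSet := by
    rw [hT]
    exact ⟨⟨Q₀, hQ₀⟩, PrimeSpectrum.ext hQ₀c⟩
  simp only [PrimeSpectrum.ConstructibleSetData.toSet, Set.mem_iUnion] at hgen
  obtain ⟨C, hC, hCg, hCf⟩ := hgen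
  refine ⟨C.f, fun h => hCf ?_, fun P hP hr => ?_⟩
  · simp [h]
  · have hmem : (⟨P, hP⟩ : PrimeSpectrum R) ∈ T.toSet := by
      simp only [PrimeSpectrum.ConstructibleSetData.toSet, Set.mem_iUnion]
      refine ⟨C, hC, ?_, ?_⟩
      · -- the equations of this piece vanish at the generic point, hence everywhere
        intro x hx
        have : x = 0 := hCg hx
        simp [this]
      · simpa [PrimeSpectrum.mem_zeroLocus] using hr
    rw [hT] at hmem
    obtain ⟨Q, hQ⟩ := hmem
    exact ⟨Q.asIdeal, Q.isPrime, congrArg PrimeSpectrum.asIdeal hQ⟩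

/-- In a finitely generated ring, an element which the `p`-th power map fixes modulo `p` for
infinitely many primes `p` is algebraic over `ℤ`. -/
theorem exists_aeval_eq_zero_of_frobenius {B : Type*} [CommRing B]
    (hfg : Algebra.FiniteType ℤ B) (b : B)
    (hb : ∀ N : ℕ, ∃ p : ℕ, p.Prime ∧ N < p ∧ b ^ p - b ∈ Ideal.span {(p : B)}) :
    ∃ g : Polynomial ℤ, g ≠ 0 ∧ aeval b g = 0 := by
  by_contra! hcon
  let f : Polynomial ℤ →+* B := (aeval b : Polynomial ℤ →ₐ[ℤ] B).toRingHom
  have hinj : Function.Injective f := by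
    rw [injective_iff_map_eq_zero]
    intro g hg
    by_contra h
    exact hcon g h hg
  have hft : f.FiniteType := by
    refine RingHom.FiniteType.of_comp_finiteType (f := algebraMap ℤ (Polynomial ℤ)) ?_
    have : f.comp (algebraMap ℤ (Polynomial ℤ)) = algebraMap ℤ B := RingHom.ext_int _ _
    rw [this]
    exact RingHom.finiteType_algebraMap.mpr hfg
  obtain ⟨r, hr, hP⟩ := exists_basicOpen_subset_range_comap
    (RingHom.FinitePresentation.of_finiteType.mp hft) hinj
  obtain ⟨p, hp, hpN, hbp⟩ := hb r.leadingCoeff.natAbs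
  have : Fact p.Prime := ⟨hp⟩
  -- the prime `pℤ[t]`
  let P : Ideal (Polynomial ℤ) := RingHom.ker (mapRingHom (Int.castRingHom (ZMod p)))
  obtain ⟨Q, hQ, hQP⟩ := hP P (RingHom.ker_isPrime _) (by
    intro h
    have h1 : r.map (Int.castRingHom (ZMod p)) = 0 := h
    have h2 : ((r.leadingCoeff : ℤ) : ZMod p) = 0 := by
      simpa [coeff_map] using congrArg (fun q => q.coeff r.natDegree) h1
    rw [ZMod.intCast_zmod_eq_zero_iff_dvd] at h2
    have h3 := Nat.le_of_dvd (Int.natAbs_pos.mpr (leadingCoeff_ne_zero.mpr hr))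
      (Int.natCast_dvd.mp h2)
    omega)
  have hpQ : (p : B) ∈ Q := by
    have : (p : Polynomial ℤ) ∈ P := by
      change mapRingHom (Int.castRingHom (ZMod p)) (p : Polynomial ℤ) = 0
      rw [map_natCast]
      exact CharP.cast_eq_zero _ p
    rw [← hQP, Ideal.mem_comap, map_natCast] at this
    exact this
  have hX : (X ^ p - X : Polynomial ℤ) ∈ P := by
    rw [← hQP, Ideal.mem_comap]
    have : f (X ^ p - X) = b ^ p - b := by simp [f]
    rw [this]
    exact (Ideal.span_singleton_le_iff_mem Q).mpr hpQ hbp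
  have hX' : (X ^ p - X : Polynomial ℤ).map (Int.castRingHom (ZMod p)) = 0 := hX
  exact FiniteField.X_pow_card_sub_X_ne_zero (ZMod p) hp.one_lt (by simpa using hX')

/-- Evaluation `ℤ[x]/(x^n - 1) → ℂ` at an `n`-th root of unity. -/
noncomputable def cycEval (n : ℕ) (ζ : nthRootsFinset n (1 : ℂ)) (hn : 0 < n) : CycRing n →+* ℂ :=
  Ideal.Quotient.lift _ (aeval (ζ : ℂ) : Polynomial ℤ →ₐ[ℤ] ℂ).toRingHom (by
    intro a ha
    obtain ⟨c, rfl⟩ := Ideal.mem_span_singleton.mp ha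
    have := (mem_nthRootsFinset hn (1 : ℂ)).mp ζ.2
    simp [this])

theorem cycEval_injective (n : ℕ) (hn : 0 < n) {u v : CycRing n}
    (h : ∀ ζ, cycEval n ζ hn u = cycEval n ζ hn v) : u = v := by
  obtain ⟨q, hq⟩ := Ideal.Quotient.mk_surjective (u - v)
  rw [← sub_eq_zero, ← hq, Ideal.Quotient.eq_zero_iff_mem, Ideal.mem_span_singleton]
  have hζ : ∀ ζ : nthRootsFinset n (1 : ℂ), aeval (ζ : ℂ) q = 0 := by
    intro ζ
    have : cycEval n ζ hn (u - v) = 0 := by rw [map_sub, h, sub_self]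
    rwa [← hq] at this
  have hmonic : (X ^ n - 1 : Polynomial ℤ).Monic := by
    simpa using monic_X_pow_sub_C (1 : ℤ) hn.ne'
  rw [← map_dvd_map (Int.castRingHom ℂ) Int.cast_injective hmonic]
  have hprod := X_pow_sub_one_eq_prod hn (Complex.isPrimitiveRoot_exp n hn.ne')
  rw [Polynomial.map_sub, Polynomial.map_pow, map_X, Polynomial.map_one, hprod]
  refine Finset.prod_dvd_of_coprime ?_ ?_
  · intro x _ y _ hxy
    exact pairwise_coprime_X_sub_C Function.injective_id hxy
  · intro ζ hmem
    rw [dvd_iff_isRoot, IsRoot, eval_map, ← hζ ⟨ζ, hmem⟩]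
    rfl

theorem cycPsi_eq_id {n p : ℕ} (h : p ≡ 1 [MOD n]) (hp : 1 ≤ p) : cycPsi n p = RingHom.id _ := by
  apply Ideal.Quotient.ringHom_ext
  apply Polynomial.ringHom_ext
  · intro a
    simp
  · obtain ⟨k, hk⟩ := (Nat.modEq_iff_dvd' hp).mp h.symm
    have h1 : (X : Polynomial ℤ) ^ p - X = X * ((X ^ n) ^ k - 1) := by
      rw [← pow_mul, ← hk, mul_sub, ← pow_succ', Nat.sub_add_cancel hp, mul_one]
    simp only [cycPsi, RingHom.comp_apply, Ideal.quotientMap_mk, RingHom.id_apply]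
    rw [Ideal.Quotient.eq, Ideal.mem_span_singleton]
    have h2 : (aeval ((X : Polynomial ℤ) ^ p)).toRingHom (X : Polynomial ℤ) = X ^ p := by simp
    rw [h2, h1]
    exact Dvd.dvd.mul_left (by simpa using sub_dvd_pow_sub_pow ((X : Polynomial ℤ) ^ n) 1 k) _

/-- Let `A` be a commutative ring, torsion-free as a `ℤ`-module and
finitely generated as a `ℤ`-algebra, with a commuting family of Frobenius lifts `ψ p`.
Fix `n ≥ 1` and let `Ψ_p = cycPsi n p` be the toric Frobenius lift on `ℤ[x]/(x^n - 1)`.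
Then the set of ring homomorphisms `φ : A → ℤ[x]/(x^n - 1)` with `φ ∘ ψ p = Ψ_p ∘ φ` for
all primes `p` is finite. -/
theorem stmt_3 (A : Type) [CommRing A] [NoZeroSMulDivisors ℤ A]
    (hfg : Algebra.FiniteType ℤ A)
    (ψ : ℕ → A →+* A)
    (hcomm : ∀ p q : ℕ, p.Prime → q.Prime → (ψ p).comp (ψ q) = (ψ q).comp (ψ p))
    (hfrob : ∀ p : ℕ, p.Prime → ∀ x : A, ψ p x - x ^ p ∈ Ideal.span {(p : A)})
    (n : ℕ) (hn : 1 ≤ n) :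
    {φ : A →+* CycRing n | ∀ p : ℕ, p.Prime → φ.comp (ψ p) = (cycPsi n p).comp φ}.Finite := by
  -- the ideal generated by all `ψ p a - a` with `p ≡ 1 mod n`
  let I : Ideal A := Ideal.span {x | ∃ p : ℕ, p.Prime ∧ p ≡ 1 [MOD n] ∧ ∃ a, x = ψ p a - a}
  have hfgB : Algebra.FiniteType ℤ (A ⧸ I) := inferInstance
  have hpoly : ∀ a : A, ∃ g : Polynomial ℤ, g ≠ 0 ∧ aeval a g ∈ I := by
    intro a
    obtain ⟨g, hg, hga⟩ := exists_aeval_eq_zero_of_frobenius hfgB (Ideal.Quotient.mk I a) (by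
      intro N
      obtain ⟨p, hp, hpN, hpn⟩ := Nat.exists_prime_gt_modEq_one N (Nat.one_le_iff_ne_zero.mp hn)
      refine ⟨p, hp, hpN, ?_⟩
      have hψ : Ideal.Quotient.mk I (ψ p a) = Ideal.Quotient.mk I a :=
        Ideal.Quotient.eq.mpr (Ideal.subset_span ⟨p, hp, hpn, a, rfl⟩)
      obtain ⟨c, hc⟩ := Ideal.mem_span_singleton.mp (hfrob p hp a)
      refine Ideal.mem_span_singleton.mpr ⟨-Ideal.Quotient.mk I c, ?_⟩
      have := congrArg (Ideal.Quotient.mk I) hc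
      rw [map_sub, map_mul, map_natCast, map_pow, hψ] at this
      linear_combination -this)
    refine ⟨g, hg, Ideal.Quotient.eq_zero_iff_mem.mp ?_⟩
    rw [← hga]
    exact (aeval_algHom_apply (Ideal.Quotient.mkₐ ℤ I) a g).symm
  choose g hg hgI using hpoly
  have hkill : ∀ φ : A →+* CycRing n,
      (∀ p : ℕ, p.Prime → φ.comp (ψ p) = (cycPsi n p).comp φ) → I ≤ RingHom.ker φ := by
    intro φ hφ
    refine Ideal.span_le.mpr ?_
    rintro _ ⟨p, hp, hpn, a, rfl⟩
    have := RingHom.congr_fun (hφ p hp) a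
    rw [cycPsi_eq_id hpn hp.one_le] at this
    simpa [sub_eq_zero] using this
  obtain ⟨s, hs⟩ := hfg.out
  -- the values of `φ` on generators at roots of unity determine `φ`
  let ev : (A →+* CycRing n) → (s × nthRootsFinset n (1 : ℂ) → ℂ) :=
    fun φ i => cycEval n i.2 hn (φ i.1)
  refine Set.Finite.of_finite_image (f := ev) ?_ ?_
  · refine Set.Finite.subset
      (Set.Finite.pi' fun i : s × nthRootsFinset n (1 : ℂ) =>
        ((g i.1).aroots ℂ).toFinset.finite_toSet) ?_
    rintro _ ⟨φ, hφ, rfl⟩ i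
    rw [Finset.mem_coe, Multiset.mem_toFinset, mem_aroots]
    refine ⟨hg _, ?_⟩
    have h0 : φ (aeval (i.1 : A) (g i.1)) = 0 := hkill φ hφ (hgI _)
    have h1 := aeval_algHom_apply ((cycEval n i.2 hn).comp φ).toIntAlgHom (i.1 : A) (g i.1)
    refine h1.trans ?_
    change cycEval n i.2 hn (φ _) = 0
    rw [h0, map_zero]
  · intro φ _ φ' _ h
    have : φ.toIntAlgHom = φ'.toIntAlgHom := by
      refine AlgHom.ext_of_adjoin_eq_top hs fun a ha => ?_
      exact cycEval_injective n hn fun ζ => congrFun h (⟨a, ha⟩, ζ)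
    exact RingHom.ext fun a => DFunLike.congr_fun this a
end

section
/- Let A be a commutative ring, torsion-free as a ℤ-module and finitely generated as a ℤ-algebra, equipped with a family (ψ_p) of pairwise commuting ring endomorphisms indexed by the primes p satisfying ψ_p(x) − x^p ∈ pA for all x ∈ A. Then the set of ring homomorphisms φ : A → ℤ satisfying φ ∘ ψ_p = φ for all primes p is finite. -/
/-!
A single Frobenius lift, the one at `2`, already forces finiteness.  For `x : A` write
`ψ 2 x = x ^ 2 + 2 * y`.  A fixed point `φ` satisfies `φ x = φ x ^ 2 + 2 * φ y`, so two fixed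
points `f`, `g` satisfy `f x - g x = (f x - g x) * (f x + g x) + 2 * (f y - g y)`.  If `f` and `g`
agree modulo `2`, then `f x + g x` is even, and this identity improves agreement modulo `2 ^ k` to
agreement modulo `2 ^ (k + 1)`; hence `f = g` (`eq_of_modTwo_eq`).  Fixed points therefore inject
into the ring homomorphisms `A → ℤ/2`, which are determined by their values on a finite set of
generators (`finite_ringHom_zmod_two`).
-/

/-- A homomorphism to `ℤ/2` is determined by its values on a finite generating set. -/
theorem finite_ringHom_zmod_two (A : Type) [CommRing A] (hfg : Algebra.FiniteType ℤ A) :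
    Finite (A →+* ZMod 2) := by
  obtain ⟨S, hS⟩ := hfg.out
  refine Finite.of_injective (fun (f : A →+* ZMod 2) (s : S) => f s) fun f g h => ?_
  have key : f.toIntAlgHom = g.toIntAlgHom :=
    AlgHom.ext_of_adjoin_eq_top hS fun s hs => congrFun h ⟨s, hs⟩
  ext x
  exact DFunLike.congr_fun key x

/-- Fixed points of a lift of the Frobenius at `2` are separated by their reductions modulo `2`. -/
theorem eq_of_modTwo_eq {A : Type} [CommRing A] (ψ : A →+* A)
    (hψ : ∀ x : A, ψ x - x ^ 2 ∈ Ideal.span {(2 : A)}) {f g : A →+* ℤ}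
    (hf : f.comp ψ = f) (hg : g.comp ψ = g)
    (h : (Int.castRingHom (ZMod 2)).comp f = (Int.castRingHom (ZMod 2)).comp g) : f = g := by
  have h2 : ∀ x, (2 : ℤ) ∣ f x - g x := fun x => by
    have hx : ((f x : ℤ) : ZMod 2) = (g x : ℤ) := DFunLike.congr_fun h x
    rw [← sub_eq_zero, ← Int.cast_sub] at hx
    exact (ZMod.intCast_zmod_eq_zero_iff_dvd _ 2).1 hx
  have hpow : ∀ k : ℕ, ∀ x, (2 : ℤ) ^ (k + 1) ∣ f x - g x := by
    intro k
    induction k with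
    | zero => simpa using h2
    | succ k ih =>
      intro x
      obtain ⟨y, hy⟩ := Ideal.mem_span_singleton.1 (hψ x)
      have ef : f x - f x ^ 2 = 2 * f y := by
        have := congrArg f hy
        rwa [map_sub, map_pow, map_mul, map_ofNat, ← RingHom.comp_apply, hf] at this
      have eg : g x - g x ^ 2 = 2 * g y := by
        have := congrArg g hy
        rwa [map_sub, map_pow, map_mul, map_ofNat, ← RingHom.comp_apply, hg] at this
      obtain ⟨a, ha⟩ := ih x
      obtain ⟨b, hb⟩ := ih y
      obtain ⟨c, hc⟩ := h2 x
      -- `f x + g x = 2 * (c + g x)` supplies the additional factor of `2`.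
      refine ⟨a * (c + g x) + b, ?_⟩
      have e : f x - g x = (f x - g x) * (f x + g x) + 2 * (f y - g y) := by
        linear_combination ef - eg
      have e' : f x + g x = 2 * (c + g x) := by linear_combination hc
      rw [e, e', ha, hb]
      ring
  ext x
  refine sub_eq_zero.1 (Int.eq_zero_of_abs_lt_dvd (hpow (f x - g x).natAbs x) ?_)
  rw [Int.abs_eq_natAbs]
  have hlt : (f x - g x).natAbs < 2 ^ ((f x - g x).natAbs + 1) :=
    (Nat.lt_succ_self _).trans Nat.lt_two_pow_self
  exact_mod_cast hlt


/-- Let `A` be a commutative ring, torsion-free as a `ℤ`-module and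
finitely generated as a `ℤ`-algebra, with a commuting family of Frobenius lifts `ψ p`
indexed by the primes.  Then the set of ring homomorphisms `φ : A → ℤ` with
`φ ∘ ψ p = φ` for all primes `p` (the `F₁`-valued points of `Spec A`) is finite. -/
theorem stmt_4 (A : Type) [CommRing A] [NoZeroSMulDivisors ℤ A]
    (hfg : Algebra.FiniteType ℤ A)
    (ψ : ℕ → A →+* A)
    (hcomm : ∀ p q : ℕ, p.Prime → q.Prime → (ψ p).comp (ψ q) = (ψ q).comp (ψ p))
    (hfrob : ∀ p : ℕ, p.Prime → ∀ x : A, ψ p x - x ^ p ∈ Ideal.span {(p : A)}) :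
    {φ : A →+* ℤ | ∀ p : ℕ, p.Prime → φ.comp (ψ p) = φ}.Finite := by
  have := finite_ringHom_zmod_two A hfg
  refine Set.Finite.of_finite_image (f := (Int.castRingHom (ZMod 2)).comp) (Set.toFinite _) ?_
  intro f hf g hg h
  exact eq_of_modTwo_eq (ψ 2) (by simpa using hfrob 2 Nat.prime_two)
    (hf 2 Nat.prime_two) (hg 2 Nat.prime_two) h
end

section
/- Let d be a natural number and let T = {z : Fin d → ℂ | z i ≠ 0 for all i} be the complex torus. Let Z ⊆ T be a nonempty subset which is Zariski closed in T, i.e. Z = T ∩ V(S) where V(S) is the common zero set of some set S of polynomials in MvPolynomial (Fin d) ℂ. Suppose that for every integer n ≥ 1 and every z ∈ T, if the coordinatewise n-th power (z₁ⁿ,…,z_dⁿ) lies in Z then z lies in Z. Then Z = T. -/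
/-!
Fix a point `z₀` of `Z` and a polynomial `f ∈ S`, and let `n` exceed the degree of `f`. Stability
under preimages of the `n`-th power map puts the whole grid `{w | ∀ i, w i ^ n = z₀ i}` into `Z`.
As the `z₀ i` are nonzero complex numbers, this grid is a product of `d` sets with `n` elements
each, so `f`, which vanishes on it and has degree less than `n` in every variable, is zero by
`MvPolynomial.eq_zero_of_eval_zero_at_prod_finset`. Hence the equations in `S` are all trivial.
-/

theorem card_nthRootsFinset_complex (n : ℕ) (hn : n ≠ 0) (a : ℂ) (ha : a ≠ 0) :
    (Polynomial.nthRootsFinset n a).card = n := by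
  classical
  have hζ := Complex.isPrimitiveRoot_exp n hn
  obtain ⟨b, hb⟩ := IsAlgClosed.exists_pow_nat_eq a (Nat.pos_of_ne_zero hn)
  rw [Polynomial.nthRootsFinset_def, Multiset.toFinset_card_of_nodup (hζ.nthRoots_nodup ha),
    hζ.card_nthRoots, if_pos ⟨b, hb⟩]

/-- Let `T ⊆ ℂ^d` be the complex torus (points with all coordinates
nonzero) and let `Z ⊆ T` be nonempty and Zariski closed in `T`, i.e. the intersection of
`T` with the common zero locus of a set `S` of polynomials.  If for every `n ≥ 1` and
every `z ∈ T` with the coordinatewise `n`-th power of `z` in `Z` one has `z ∈ Z`, then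
`Z = T`. -/
theorem stmt_5 (d : ℕ) (T : Set (Fin d → ℂ)) (hT : T = {z | ∀ i, z i ≠ 0})
    (Z : Set (Fin d → ℂ)) (hZne : Z.Nonempty)
    (S : Set (MvPolynomial (Fin d) ℂ))
    (hZ : Z = T ∩ {z | ∀ f ∈ S, MvPolynomial.eval z f = 0})
    (hstab : ∀ n : ℕ, 1 ≤ n → ∀ z ∈ T, (fun i => z i ^ n) ∈ Z → z ∈ Z) :
    Z = T := by
  obtain ⟨z₀, hz₀⟩ := hZne
  have hz₀T : ∀ i, z₀ i ≠ 0 := by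
    have h := hz₀
    rw [hZ, hT] at h
    exact h.1
  have hzero : ∀ f ∈ S, f = 0 := by
    intro f hf
    have hn : f.totalDegree + 1 ≠ 0 := Nat.succ_ne_zero _
    refine MvPolynomial.eq_zero_of_eval_zero_at_prod_finset f
      (fun i => Polynomial.nthRootsFinset (f.totalDegree + 1) (z₀ i)) (fun i => ?_) ?_
    · rw [card_nthRootsFinset_complex _ hn _ (hz₀T i)]
      exact Nat.lt_succ_of_le (MvPolynomial.degreeOf_le_totalDegree f i)
    · intro w hw
      have hpow : (fun i => w i ^ (f.totalDegree + 1)) = z₀ :=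
        funext fun i => (Polynomial.mem_nthRootsFinset (Nat.succ_pos _) _).1 (hw i)
      have hwT : w ∈ T := by
        rw [hT]
        exact fun i => Polynomial.ne_zero_of_mem_nthRootsFinset (hz₀T i) (hw i)
      have hwZ : w ∈ Z := hstab _ (Nat.succ_pos _) w hwT (by rwa [hpow])
      rw [hZ] at hwZ
      exact hwZ.2 f hf
  rw [hZ]
  refine Set.inter_eq_left.2 fun z _ f hf => ?_
  rw [hzero f hf, map_zero]
end

section
/- Let T be a nonempty set of nonzero complex numbers such that for every nonzero z ∈ ℂ and every integer n ≥ 1, if z^n ∈ T then z ∈ T. Then T is infinite. -/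
/-- A nonempty set of nonzero complex numbers which is closed under the
extraction of `n`-th roots (if `z ≠ 0` and `z ^ n ∈ T` for some `n ≥ 1` then `z ∈ T`)
is infinite. -/
theorem stmt_7 (T : Set ℂ) (hne : T.Nonempty) (hT0 : ∀ z ∈ T, z ≠ 0)
    (hroot : ∀ z : ℂ, z ≠ 0 → ∀ n : ℕ, 1 ≤ n → z ^ n ∈ T → z ∈ T) :
    T.Infinite := by
  -- An element of `T` has `n` distinct `n`-th roots, all in `T`; take `n = |T| + 1`.
  intro hfin
  obtain ⟨a, ha⟩ := hne
  have hn : T.ncard + 1 ≠ 0 := Nat.succ_ne_zero _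
  have hζ := Complex.isPrimitiveRoot_exp (T.ncard + 1) hn
  generalize Complex.exp (2 * Real.pi * Complex.I / ((T.ncard + 1 : ℕ) : ℂ)) = ζ at hζ
  obtain ⟨w, hw⟩ := IsAlgClosed.exists_pow_nat_eq a (Nat.pos_of_ne_zero hn)
  have hw0 : w ≠ 0 := by
    rintro rfl
    exact hT0 a ha (by rw [← hw, zero_pow hn])
  have hmem : ∀ i : ℕ, w * ζ ^ i ∈ T := fun i =>
    hroot _ (mul_ne_zero hw0 (pow_ne_zero i (hζ.ne_zero hn))) (T.ncard + 1) (by omega) (by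
      rwa [mul_pow, hw, pow_right_comm, hζ.pow_eq_one, one_pow, mul_one])
  have hle := Set.ncard_le_ncard_of_injOn (s := (Finset.range (T.ncard + 1) : Set ℕ))
    (fun i => w * ζ ^ i) (fun i _ => hmem i)
    (fun i hi j hj h => hζ.pow_inj (by simpa using hi) (by simpa using hj)
      (mul_left_cancel₀ hw0 h)) hfin
  rw [Set.ncard_coe_finset, Finset.card_range] at hle
  omega
end

section
/- Let σ be a ring automorphism of the ring of Laurent polynomials ℤ[t, t⁻¹] (LaurentPolynomial ℤ) satisfying σ(t) = t⁻¹. Then the ℤ-algebra homomorphism ℤ[X] → ℤ[t, t⁻¹] sending X to t + t⁻¹ is injective, and its image is exactly the fixed subring {f ∈ ℤ[t, t⁻¹] | σ(f) = f}. -/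
/-!
Write `x = t + t⁻¹`.  The automorphism `σ` is `LaurentPolynomial.invert`, i.e. it sends the
coefficient of `tⁿ` to that of `t⁻ⁿ`.

Injectivity: `xᵏ` has top term `tᵏ`, so the coefficient of `tⁿ` in `p(x)`, with `n` the degree
of `p`, is the leading coefficient of `p` (`coeff_add_pow`).

Image: for each `n : ℕ` the Dickson polynomial `D_n = dickson 1 1 n` satisfies
`D_n(x) = tⁿ + t⁻ⁿ`, whence `g + invert g` is a polynomial in `x` for every `g`
(`add_invert_mem_range`).  A fixed element `f` is `f₀ + g + invert g`, where `g` is the part of `f`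
supported in positive exponents.
-/

open LaurentPolynomial

namespace ChebyshevLine

/-- The `ℤ`-algebra map `ℤ[X] → ℤ[t, t⁻¹]`, `X ↦ t + t⁻¹`. -/
noncomputable abbrev chebyshevMap : Polynomial ℤ →ₐ[ℤ] LaurentPolynomial ℤ :=
  Polynomial.aeval (T 1 + T (-1))

lemma coeff_mul_T (f : LaurentPolynomial ℤ) (n m : ℤ) :
    (f * T n).coeff m = f.coeff (m - n) := by
  induction f using LaurentPolynomial.induction_on' with
  | add p q hp hq => simp [add_mul, hp, hq]
  | C_mul_T k a =>
    rw [mul_assoc, ← T_add, ← single_eq_C_mul_T, ← single_eq_C_mul_T]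
    simp only [AddMonoidAlgebra.coeff_single, Finsupp.single_apply, eq_sub_iff_add_eq]

lemma coeff_add_pow (k : ℕ) (m : ℤ) (h : (k : ℤ) ≤ m) :
    ((T 1 + T (-1) : LaurentPolynomial ℤ) ^ k).coeff m = if m = k then 1 else 0 := by
  induction k generalizing m with
  | zero => rw [pow_zero, ← T_zero, T_apply]; simp [eq_comm]
  | succ k ih =>
    push_cast at h
    rw [pow_succ, mul_add, AddMonoidAlgebra.coeff_add, Finsupp.add_apply, coeff_mul_T,
      coeff_mul_T, ih _ (by lia), ih _ (by lia)]
    push_cast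
    split_ifs <;> lia

lemma chebyshevMap_injective : Function.Injective chebyshevMap := by
  rw [injective_iff_map_eq_zero]
  intro p hp
  have h : (chebyshevMap p).coeff p.natDegree = p.leadingCoeff := by
    rw [chebyshevMap, Polynomial.aeval_eq_sum_range, Finset.sum_range_succ]
    rw [AddMonoidAlgebra.coeff_add, AddMonoidAlgebra.coeff_sum, Finsupp.add_apply,
      Finsupp.finsetSum_apply, Finset.sum_eq_zero]
    · rw [AddMonoidAlgebra.coeff_smul, Finsupp.smul_apply, coeff_add_pow _ _ le_rfl]
      simp
    · intro k hk
      have hk := Finset.mem_range.1 hk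
      rw [AddMonoidAlgebra.coeff_smul, Finsupp.smul_apply, coeff_add_pow _ _ (by lia),
        if_neg (by lia), smul_zero]
  rw [hp] at h
  exact Polynomial.leadingCoeff_eq_zero.1 (by simpa using h.symm)

lemma chebyshevMap_dickson (n : ℕ) :
    chebyshevMap (Polynomial.dickson 1 1 n) = T n + T (-n) := by
  have h := Polynomial.dickson_one_one_eval_add_inv (T 1 : LaurentPolynomial ℤ) (T (-1))
    (by rw [← T_add]; simp) n
  have hmap := Polynomial.map_dickson (k := 1) (a := (1 : ℤ))
    (algebraMap ℤ (LaurentPolynomial ℤ)) n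
  rw [map_one] at hmap
  rw [← hmap, Polynomial.eval_map_algebraMap, T_pow, T_pow] at h
  simpa using h

lemma add_invert_mem_range (g : LaurentPolynomial ℤ) :
    g + invert g ∈ chebyshevMap.range := by
  induction g using LaurentPolynomial.induction_on' with
  | add p q hp hq =>
    rw [map_add, add_add_add_comm]
    exact add_mem hp hq
  | C_mul_T n a =>
    rw [map_mul, invert_C, invert_T, ← mul_add]
    refine mul_mem (chebyshevMap.range.algebraMap_mem a) ?_
    obtain ⟨k, rfl | rfl⟩ := n.eq_nat_or_neg
    · exact ⟨_, chebyshevMap_dickson k⟩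
    · rw [neg_neg, add_comm]
      exact ⟨_, chebyshevMap_dickson k⟩

lemma mem_range_of_invert_eq {f : LaurentPolynomial ℤ} (hf : invert f = f) :
    f ∈ chebyshevMap.range := by
  let g : LaurentPolynomial ℤ := .ofCoeff (f.coeff.filter (0 < ·))
  have hdecomp : f = C (f.coeff 0) + (g + invert g) := by
    ext m
    have hm : f.coeff (-m) = f.coeff m := by rw [← invert_apply, hf]
    simp only [AddMonoidAlgebra.coeff_add, Finsupp.add_apply, C_apply, invert_apply, g,
      Finsupp.filter_apply, hm]
    rcases lt_trichotomy m 0 with h | rfl | h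
    · simp [h, h.ne, h.le]
    · simp
    · simp [h, h.ne', h.le]
  rw [hdecomp]
  exact add_mem (chebyshevMap.range.algebraMap_mem _) (add_invert_mem_range g)

lemma eq_invert (σ : LaurentPolynomial ℤ ≃+* LaurentPolynomial ℤ) (hσ : σ (T 1) = T (-1))
    (f : LaurentPolynomial ℤ) : σ f = invert f := by
  -- Both sides agree on the image of `ℤ[X]`, of which `ℤ[t, t⁻¹]` is a localization.
  have h : (σ : LaurentPolynomial ℤ →+* LaurentPolynomial ℤ) =
      (invert : LaurentPolynomial ℤ ≃ₐ[ℤ] LaurentPolynomial ℤ) := by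
    refine IsLocalization.ringHom_ext (Submonoid.powers (Polynomial.X : Polynomial ℤ)) ?_
    refine Polynomial.ringHom_ext' (RingHom.ext_int _ _) ?_
    simpa [algebraMap_eq_toLaurent] using hσ
  exact DFunLike.congr_fun h f

end ChebyshevLine

/-- Let `σ` be a ring automorphism of `ℤ[t, t⁻¹]` with `σ t = t⁻¹`.
Then the `ℤ`-algebra map `ℤ[X] → ℤ[t, t⁻¹]`, `X ↦ t + t⁻¹`, is injective and its image is
exactly the fixed subring of `σ` (the Chebychev line). -/
theorem stmt_8 (σ : LaurentPolynomial ℤ ≃+* LaurentPolynomial ℤ)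
    (hσ : σ (T 1) = T (-1)) :
    Function.Injective
        (Polynomial.aeval (T 1 + T (-1)) : Polynomial ℤ →ₐ[ℤ] LaurentPolynomial ℤ) ∧
      Set.range
          (Polynomial.aeval (T 1 + T (-1)) : Polynomial ℤ →ₐ[ℤ] LaurentPolynomial ℤ) =
        {f : LaurentPolynomial ℤ | σ f = f} := by
  refine ⟨ChebyshevLine.chebyshevMap_injective, Set.Subset.antisymm ?_ fun f hf => ?_⟩
  · rintro _ ⟨p, rfl⟩
    rw [Set.mem_ofPred_eq, ChebyshevLine.eq_invert σ hσ, ← Polynomial.aeval_algHom_apply]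
    simp [add_comm]
  · rw [Set.mem_ofPred_eq, ChebyshevLine.eq_invert σ hσ] at hf
    exact ChebyshevLine.mem_range_of_invert_eq hf
end

section
/- Let M be a commutative monoid and for each integer n ≥ 1 let ψ_n be the ring endomorphism of the monoid algebra ℤ[M] (MonoidAlgebra ℤ M) induced by the monoid endomorphism m ↦ m^n of M. Then: (1) ψ_m ∘ ψ_n = ψ_{mn} for all m, n ≥ 1 (in particular the ψ_n pairwise commute); and (2) for every prime p and every x ∈ ℤ[M], ψ_p(x) − x^p lies in the ideal p·ℤ[M]. -/
/-!
Composition of the `ψ_n` is functoriality of `M ↦ ℤ[M]` applied to `(a ^ n) ^ m = a ^ (m * n)`.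
For the Frobenius congruence, both `ψ_p` and, modulo `p`, the map `x ↦ x ^ p` are additive, so it
suffices to compare them on monomials, where the claim is Fermat's little theorem.
-/

/-- The toric operator `ψ_n` on the monoid algebra `ℤ[M]`: the ring endomorphism induced
by the monoid endomorphism `m ↦ m ^ n` of `M`. -/
noncomputable def toricPsi (M : Type) [CommMonoid M] (n : ℕ) :
    MonoidAlgebra ℤ M →+* MonoidAlgebra ℤ M :=
  MonoidAlgebra.mapDomainRingHom ℤ (powMonoidHom n : M →* M)

/-- The Frobenius congruence for `ψ_p` on a monomial `r · m` is Fermat's little theorem for the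
coefficient `r`. -/
theorem toricPsi_single_sub_pow {M : Type} [CommMonoid M] {p : ℕ} (hp : p.Prime) (m : M) (r : ℤ) :
    (p : MonoidAlgebra ℤ M) ∣
      toricPsi M p (MonoidAlgebra.single m r) - MonoidAlgebra.single m r ^ p := by
  have : Fact p.Prime := ⟨hp⟩
  obtain ⟨c, hc⟩ : (p : ℤ) ∣ r - r ^ p := by
    rw [← ZMod.intCast_zmod_eq_zero_iff_dvd]
    simp
  refine ⟨MonoidAlgebra.single (m ^ p) c, ?_⟩
  simp only [toricPsi, MonoidAlgebra.mapDomainRingHom_apply, MonoidAlgebra.mapDomain_single,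
    powMonoidHom_apply, MonoidAlgebra.single_pow]
  rw [← MonoidAlgebra.single_sub, hc, ← nsmul_eq_mul, ← nsmul_eq_mul, MonoidAlgebra.smul_single]

/-- For a commutative monoid `M`, the toric operators `ψ_n` on `ℤ[M]`
satisfy `ψ_m ∘ ψ_n = ψ_{m n}` for all `m, n ≥ 1` (in particular they pairwise commute),
and for every prime `p` and every `x ∈ ℤ[M]`, `ψ_p x - x ^ p` lies in the ideal
`p · ℤ[M]`: the toric `Λ`-structure on `ℤ[M]`. -/
theorem stmt_9 (M : Type) [CommMonoid M] :
    (∀ m n : ℕ, 1 ≤ m → 1 ≤ n →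
        (toricPsi M m).comp (toricPsi M n) = toricPsi M (m * n)) ∧
      (∀ p : ℕ, p.Prime → ∀ x : MonoidAlgebra ℤ M,
        toricPsi M p x - x ^ p ∈ Ideal.span {(p : MonoidAlgebra ℤ M)}) := by
  refine ⟨fun m n _ _ => ?_, fun p hp x => ?_⟩
  · simp only [toricPsi]
    rw [← MonoidAlgebra.mapDomainRingHom_comp]
    congr 1
    ext a
    simp [pow_mul']
  · rw [Ideal.mem_span_singleton]
    induction x using MonoidAlgebra.induction_linear with
    | zero => simp [hp.ne_zero]
    | single m r => exact toricPsi_single_sub_pow hp m r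
    | add x y hx hy =>
      obtain ⟨r, hr⟩ := exists_add_pow_prime_eq hp x y
      obtain ⟨a, ha⟩ := hx
      obtain ⟨b, hb⟩ := hy
      refine ⟨a + b - x * y * r, ?_⟩
      rw [map_add, hr]
      linear_combination ha + hb
end

section
/- Let n be a natural number, let p be a prime, and let ψ be a ring endomorphism of the product ring ℤ^n (Fin n → ℤ) such that for every x ∈ ℤ^n, ψ(x) − x^p ∈ p·ℤ^n (i.e. p divides ψ(x)_i − (x_i)^p for all i). Then ψ is the identity map. -/
/-!
The standard basis vectors `e_j` of `ℤ^n` are idempotent, so each coordinate of `ψ e_j` is an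
idempotent integer, i.e. `0` or `1`. It is congruent modulo `p` to the corresponding coordinate of
`e_j ^ p = e_j`, which is also `0` or `1`; since `0 ≢ 1` modulo `p`, the two agree. Hence `ψ` fixes
every `e_j`, and these generate `ℤ^n` as an additive group.
-/

/-- Idempotent integers that agree modulo a prime are equal. -/
lemma Int.eq_of_isIdempotentElem_of_dvd_sub {p : ℕ} (hp : p.Prime) {a b : ℤ}
    (ha : IsIdempotentElem a) (hb : IsIdempotentElem b) (hab : (p : ℤ) ∣ a - b) : a = b := by
  have hp1 : ¬ (p : ℤ) ∣ 1 := (Nat.prime_iff_prime_int.mp hp).not_dvd_one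
  rcases IsIdempotentElem.iff_eq_zero_or_one.mp ha with rfl | rfl <;>
    rcases IsIdempotentElem.iff_eq_zero_or_one.mp hb with rfl | rfl <;>
    simp_all

/-- Let `ψ` be a ring endomorphism of `ℤ^n` such that
`ψ x - x ^ p ∈ p · ℤ^n` for all `x` (a Frobenius lift for the prime `p`).  Then `ψ` is
the identity: the only `Λ`-structure on a finite disjoint union of copies of `Spec ℤ` is
the trivial one. -/
theorem stmt_10 (n p : ℕ) (hp : p.Prime)
    (ψ : (Fin n → ℤ) →+* (Fin n → ℤ))
    (h : ∀ x : Fin n → ℤ, ∀ i : Fin n, (p : ℤ) ∣ (ψ x - x ^ p) i) :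
    ψ = RingHom.id (Fin n → ℤ) := by
  have idem (j : Fin n) : IsIdempotentElem (Pi.single j 1 : Fin n → ℤ) := by
    simp [IsIdempotentElem, ← Pi.single_mul]
  have fix (j : Fin n) : ψ (Pi.single j 1) = Pi.single j 1 := by
    funext i
    refine Int.eq_of_isIdempotentElem_of_dvd_sub hp
      (congrFun ((idem j).map ψ) i) (congrFun (idem j) i) ?_
    simpa only [(idem j).pow_eq hp.ne_zero, Pi.sub_apply] using h (Pi.single j 1) i
  have hadd : (ψ : (Fin n → ℤ) →+ (Fin n → ℤ)) = AddMonoidHom.id _ := by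
    -- an additive map out of `ℤ^n` is determined by its values on the `e_j`
    ext j : 2
    exact fix j
  exact RingHom.ext fun x => DFunLike.congr_fun hadd x
end

section
/- Let C be a commutative ring which is reduced, torsion-free as a ℤ-module, and such that ℚ ⊗_ℤ C is a finite-dimensional ℚ-vector space. Let p be a prime and let ψ : C → C be an injective ring endomorphism satisfying ψ(x) − x^p ∈ pC for all x ∈ C. Then ψ is bijective and the quotient ring C/pC is reduced. -/
/-!
The endomorphism `ψ` has finite order. Put `A = ℚ ⊗ C`, a finite-dimensional `ℚ`-algebra.
It has finitely many maximal ideals `m`, and for each of them there are finitely many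
`ℚ`-algebra maps `A → A ⧸ m`, so two distinct iterates `ψ ^ a`, `ψ ^ b` induce the same family of
maps `A → A ⧸ m`. For `x : C` the image of `ψ ^ a x - ψ ^ b x` then lies in every maximal ideal of
the Artinian ring `A`, hence is nilpotent; as `C` embeds in `A` and is reduced,
`ψ ^ a = ψ ^ b` on `C`. Cancelling with injectivity gives `ψ ^ n = 1` with `n > 0`.

Bijectivity is immediate. If `x` is nilpotent modulo `p`, then for large `k` one has
`x = ψ ^ (n * k) x ≡ x ^ (p ^ (n * k)) ≡ 0` modulo `p`, so `C ⧸ pC` is reduced.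
-/

open scoped TensorProduct

/-- An injective endomorphism of a reduced torsion-free ring of finite rank has finite order. -/
lemma exists_pow_eq_one_of_injective (C : Type) [CommRing C] [IsReduced C]
    [NoZeroSMulDivisors ℤ C] (hfd : Module.Finite ℚ (ℚ ⊗[ℤ] C))
    (ψ : C →+* C) (hinj : Function.Injective ψ) : ∃ n : ℕ, 0 < n ∧ ψ ^ n = 1 := by
  have hart : IsArtinianRing (ℚ ⊗[ℤ] C) := IsArtinianRing.of_finite ℚ _
  have htf : Module.IsTorsionFree ℤ C := inferInstance
  have hflat : Module.Flat ℤ C := inferInstance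
  have hι : Function.Injective (Algebra.TensorProduct.includeRight : C →ₐ[ℤ] ℚ ⊗[ℤ] C) :=
    Algebra.TensorProduct.includeRight_injective (RingHom.injective_int (algebraMap ℤ ℚ))
  let F : ℕ → (m : MaximalSpectrum (ℚ ⊗[ℤ] C)) → (ℚ ⊗[ℤ] C →ₐ[ℚ] (ℚ ⊗[ℤ] C) ⧸ m.asIdeal) :=
    fun n m => (Ideal.Quotient.mkₐ ℚ m.asIdeal).comp
      (Algebra.TensorProduct.map (AlgHom.id ℚ ℚ) (ψ ^ n).toIntAlgHom)
  have hfin : ∀ m : MaximalSpectrum (ℚ ⊗[ℤ] C),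
      Finite (ℚ ⊗[ℤ] C →ₐ[ℚ] (ℚ ⊗[ℤ] C) ⧸ m.asIdeal) := fun m => by
    have := m.isMaximal
    let _ := Ideal.Quotient.field m.asIdeal
    infer_instance
  obtain ⟨a, b, hab, hF⟩ := Finite.exists_ne_map_eq_of_infinite F
  have key : ψ ^ a = ψ ^ b := by
    ext x
    have hmem : (1 : ℚ) ⊗ₜ[ℤ] ((ψ ^ a) x - (ψ ^ b) x) ∈ nilradical (ℚ ⊗[ℤ] C) := by
      rw [nilradical, ← IsArtinianRing.jacobson_eq_radical, Ideal.jacobson, Ideal.mem_sInf]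
      rintro I ⟨-, hI⟩
      have h := DFunLike.congr_fun (congrFun hF ⟨I, hI⟩) ((1 : ℚ) ⊗ₜ[ℤ] x)
      rw [TensorProduct.tmul_sub]
      exact Ideal.Quotient.eq.mp (by simpa [F] using h)
    obtain ⟨k, hk⟩ := mem_nilradical.mp hmem
    rw [Algebra.TensorProduct.tmul_pow, one_pow] at hk
    have h0 : ((ψ ^ a) x - (ψ ^ b) x) ^ k = 0 := hι (by simpa using hk)
    exact sub_eq_zero.mp (IsNilpotent.eq_zero ⟨k, h0⟩)
  have cancel : ∀ a b : ℕ, a < b → ψ ^ a = ψ ^ b → ∃ n : ℕ, 0 < n ∧ ψ ^ n = 1 := by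
    intro a b hlt h
    refine ⟨b - a, Nat.sub_pos_of_lt hlt, ?_⟩
    ext x
    have hx := DFunLike.congr_fun h x
    have hia : Function.Injective (ψ ^ a : C →+* C) := by
      rw [RingHom.coe_pow]
      exact hinj.iterate a
    apply hia
    rw [← RingHom.comp_apply, ← RingHom.mul_def, ← pow_add, Nat.add_sub_cancel' hlt.le, ← hx]
    rfl
  rcases lt_or_gt_of_ne hab with h | h
  · exact cancel a b h key
  · exact cancel b a h key.symm

/-- Iterating a Frobenius lift `k` times lifts the `p ^ k`-power map. -/
lemma mk_pow_frobenius_lift {C : Type} [CommRing C] (p : ℕ) (ψ : C →+* C)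
    (hfrob : ∀ x : C, ψ x - x ^ p ∈ Ideal.span {(p : C)}) (k : ℕ) (x : C) :
    Ideal.Quotient.mk (Ideal.span {(p : C)}) ((ψ ^ k) x) =
      Ideal.Quotient.mk (Ideal.span {(p : C)}) x ^ p ^ k := by
  induction k with
  | zero => simp
  | succ k ih =>
    rw [pow_succ', RingHom.mul_def, RingHom.comp_apply, Ideal.Quotient.eq.mpr (hfrob _), map_pow, ih, ← pow_mul,
      ← pow_succ]

/-- Let `C` be a reduced commutative ring, torsion-free as a
`ℤ`-module, with `ℚ ⊗[ℤ] C` finite-dimensional over `ℚ`.  If `ψ : C → C` is an injective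
ring endomorphism with `ψ x - x ^ p ∈ pC` for all `x` (a Frobenius lift at the prime
`p`), then `ψ` is bijective and `C ⧸ pC` is reduced. -/
theorem stmt_11 (C : Type) [CommRing C] [IsReduced C] [NoZeroSMulDivisors ℤ C]
    (hfd : Module.Finite ℚ (ℚ ⊗[ℤ] C))
    (p : ℕ) (hp : p.Prime) (ψ : C →+* C) (hinj : Function.Injective ψ)
    (hfrob : ∀ x : C, ψ x - x ^ p ∈ Ideal.span {(p : C)}) :
    Function.Bijective ψ ∧ IsReduced (C ⧸ Ideal.span {(p : C)}) := by
  obtain ⟨n, hn, hψ⟩ := exists_pow_eq_one_of_injective C hfd ψ hinj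
  refine ⟨⟨hinj, fun x => ⟨(ψ ^ (n - 1)) x, ?_⟩⟩, ⟨fun y hy => ?_⟩⟩
  · rw [← RingHom.comp_apply, ← RingHom.mul_def, ← pow_succ', Nat.sub_add_cancel hn, hψ]
    rfl
  · obtain ⟨x, rfl⟩ := Ideal.Quotient.mk_surjective y
    obtain ⟨k, hk⟩ := hy
    have h := mk_pow_frobenius_lift p ψ hfrob (n * k) x
    rw [pow_mul, hψ, one_pow, RingHom.one_def, RingHom.id_apply] at h
    rw [h]
    have hle : k ≤ p ^ (n * k) :=
      (Nat.le_mul_of_pos_left k hn).trans (Nat.lt_pow_self hp.one_lt).le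
    exact pow_eq_zero_of_le hle hk
end

section
/- Let A be a nonzero commutative ring, torsion-free as a ℤ-module and finitely generated as a ℤ-algebra, equipped with a family (ψ_p) of pairwise commuting ring endomorphisms indexed by the primes p satisfying ψ_p(x) − x^p ∈ pA for all x ∈ A. Then there exists an ideal I of A with I ≠ A such that ψ_p(I) ⊆ I for every prime p and the quotient ring A/I is étale over ℤ (Algebra.Etale ℤ (A/I)). -/
/-!
Call an ideal of a `Λ`-ring admissible if it is proper, stable under all `ψ p`, and has
torsion-free quotient. The zero ideal of `A` is admissible and `A` is noetherian, so there is a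
maximal admissible ideal `I`, and `B = A ⧸ I` is a `Λ`-ring whose only admissible ideal is zero.
Such a `B` is étale over `ℤ` (`etale_of_minimal`), as follows.

Let `𝔪` be a maximal ideal of `B`. Its residue field is finite, of characteristic `q` say, with
`q ^ n` elements. Consider the ideal `J` generated by all `ψ q ^ n x - x` (`fixedIdeal`). It lies
in `𝔪`, because `ψ q ^ n` lifts `x ↦ x ^ q ^ n`, and it is stable under every `ψ p` by
commutativity. It is moreover stable under the operation `δ c = (ψ q c - c ^ q) / q`
(`exists_delta_mem_fixedIdeal`). Since `δ` divides an integer `q * M` by `q`, up to a multiple of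
`q * M`, a nonzero integer in `J` would lead to one prime to `q` in `J ⊆ 𝔪`, which is impossible
(`natCast_notMem_fixedIdeal`). Hence the saturation of `J` is admissible, therefore zero, and
`ψ q ^ n` is the identity of `B`.

Thus `x = x ^ q ^ n` modulo `q`, so `d x` is divisible by `q` in `Ω[B⁄ℤ]`. As this holds for some
`q` in each maximal ideal, Nakayama's lemma gives `Ω[B⁄ℤ] = 0`. So `B` is unramified, flat
(being torsion-free) and finitely presented over `ℤ`, that is, étale.
-/

/-! ### Residue fields of finitely generated rings -/

/-- `ℤ` is a Jacobson ring: a nonzero prime is maximal, and an integer `x` in the Jacobson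
radical of `0` makes `x * x + 1` a unit, which forces `x = 0`. -/
theorem isJacobsonRing_int : IsJacobsonRing ℤ := by
  rw [isJacobsonRing_iff_prime_eq]
  intro P hP
  by_cases h : P = ⊥
  · subst h
    rw [eq_bot_iff]
    intro x hx
    have h1 := Ideal.mem_jacobson_bot.mp hx x
    rw [Int.isUnit_iff] at h1
    rw [Ideal.mem_bot]
    rcases h1 with h1 | h1 <;> nlinarith [mul_self_nonneg x]
  · have : P.IsMaximal := hP.isMaximal h
    exact Ideal.jacobson_eq_self_of_isMaximal

/-- The Nullstellensatz over `ℤ`: residue fields of a finitely generated ring are finite. -/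
theorem finite_quotient_of_isMaximal {B : Type*} [CommRing B] [Algebra.FiniteType ℤ B]
    (𝔪 : Ideal B) [h𝔪 : 𝔪.IsMaximal] : Finite (B ⧸ 𝔪) := by
  have := isJacobsonRing_int
  let := Ideal.Quotient.field 𝔪
  have hfin : Module.Finite ℤ (B ⧸ 𝔪) := finite_of_finite_type_of_isJacobsonRing ℤ (B ⧸ 𝔪)
  apply Module.finite_of_fg_torsion
  -- In characteristic zero `ℤ` would be a field, being a subring of a field integral over it.
  have hni : ¬ Function.Injective (algebraMap ℤ (B ⧸ 𝔪)) := fun hinj =>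
    Int.not_isField (isField_of_isIntegral_of_isField hinj (Field.toIsField _))
  obtain ⟨n, hn, hn0⟩ : ∃ n : ℤ, algebraMap ℤ (B ⧸ 𝔪) n = 0 ∧ n ≠ 0 := by
    rw [injective_iff_map_eq_zero] at hni
    push Not at hni
    exact hni
  intro x
  refine ⟨⟨n, mem_nonZeroDivisors_of_ne_zero hn0⟩, ?_⟩
  change n • x = 0
  rw [Algebra.smul_def, hn, zero_mul]

/-- A maximal ideal of a finitely generated ring contains a prime number `q`, and some power
of the `q`-th power map is the identity of its residue field. -/
theorem exists_prime_mem_of_isMaximal {B : Type*} [CommRing B] [Algebra.FiniteType ℤ B]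
    (𝔪 : Ideal B) [h𝔪 : 𝔪.IsMaximal] :
    ∃ q : ℕ, q.Prime ∧ (q : B) ∈ 𝔪 ∧ ∃ n : ℕ, n ≠ 0 ∧ ∀ x : B, x ^ q ^ n - x ∈ 𝔪 := by
  have := finite_quotient_of_isMaximal 𝔪
  let := Ideal.Quotient.field 𝔪
  have := Fintype.ofFinite (B ⧸ 𝔪)
  obtain ⟨q, hq⟩ := CharP.exists (B ⧸ 𝔪)
  obtain ⟨n, hqp, hcard⟩ := FiniteField.card (B ⧸ 𝔪) q
  refine ⟨q, hqp, ?_, n, n.ne_zero, fun x => ?_⟩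
  · rw [← Ideal.Quotient.eq_zero_iff_mem, map_natCast]
    exact CharP.cast_eq_zero _ _
  · rw [← Ideal.Quotient.eq_zero_iff_mem, map_sub, map_pow, ← hcard, FiniteField.pow_card, sub_self]

/-! ### A criterion for being étale over `ℤ` -/

/-- A finitely generated module which every element of `S` maps onto itself vanishes, as soon as
every maximal ideal meets `S`. -/
theorem subsingleton_of_smul_surjective {B M : Type*} [CommRing B] [AddCommGroup M] [Module B M]
    [Module.Finite B M] (S : Set B) (hS : ∀ 𝔪 : Ideal B, 𝔪.IsMaximal → ∃ s ∈ S, s ∈ 𝔪)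
    (h : ∀ s ∈ S, ∀ m : M, ∃ m' : M, s • m' = m) : Subsingleton M := by
  rw [← Module.annihilator_eq_top_iff (R := B)]
  by_contra hne
  obtain ⟨𝔪, h𝔪, hle⟩ := Ideal.exists_le_maximal _ hne
  obtain ⟨s, hs, hs𝔪⟩ := hS 𝔪 h𝔪
  obtain ⟨r, hr, hr0⟩ := Submodule.exists_sub_one_mem_and_smul_eq_zero_of_fg_of_le_smul 𝔪
    (⊤ : Submodule B M) Module.Finite.fg_top (fun m _ => by
      obtain ⟨m', rfl⟩ := h s hs m
      exact Submodule.smul_mem_smul hs𝔪 trivial)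
  have hr𝔪 : r ∈ 𝔪 := hle (Module.mem_annihilator.mpr fun m => hr0 m trivial)
  refine h𝔪.ne_top ((Ideal.eq_top_iff_one _).mpr ?_)
  simpa using 𝔪.sub_mem hr𝔪 hr

/-- A finitely generated ring, torsion-free over `ℤ`, is étale if at each prime `q` occurring as
a residue characteristic some power of the Frobenius of `B / qB` is the identity: then
`d x = d (x ^ q ^ n) = 0` modulo `q`, so the module of differentials is divisible by `q`. -/
theorem etale_of_pow_sub_mem {B : Type*} [CommRing B] [Algebra.FiniteType ℤ B]
    [NoZeroSMulDivisors ℤ B]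
    (h : ∀ 𝔪 : Ideal B, 𝔪.IsMaximal → ∃ q : ℕ, (q : B) ∈ 𝔪 ∧
      ∃ n : ℕ, n ≠ 0 ∧ ∀ x : B, ∃ y : B, x = x ^ q ^ n + q * y) :
    Algebra.Etale ℤ B := by
  have : Algebra.FinitePresentation ℤ B := Algebra.FinitePresentation.of_finiteType.mp inferInstance
  have : Algebra.FormallyUnramified ℤ B := by
    constructor
    refine subsingleton_of_smul_surjective
      {s : B | ∃ q : ℕ, s = q ∧ ∃ n : ℕ, n ≠ 0 ∧ ∀ x : B, ∃ y : B, x = x ^ q ^ n + q * y} ?_ ?_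
    · intro 𝔪 h𝔪
      obtain ⟨q, hq, hn⟩ := h 𝔪 h𝔪
      exact ⟨q, ⟨q, rfl, hn⟩, hq⟩
    · rintro _ ⟨q, rfl, n, hn, hx⟩ m
      have hm : m ∈ Submodule.span B (Set.range (KaehlerDifferential.D ℤ B)) := by
        rw [KaehlerDifferential.span_range_derivation]; trivial
      induction hm using Submodule.span_induction with
      | mem m hm =>
        obtain ⟨x, rfl⟩ := hm
        obtain ⟨y, hy⟩ := hx x
        obtain ⟨k, rfl⟩ := Nat.exists_eq_succ_of_ne_zero hn
        refine ⟨((q : B) ^ k * x ^ (q ^ (k + 1) - 1)) • KaehlerDifferential.D ℤ B x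
          + KaehlerDifferential.D ℤ B y, ?_⟩
        conv_rhs => rw [hy]
        simp only [map_add, Derivation.leibniz_pow, Derivation.leibniz, Derivation.map_natCast,
          smul_zero, add_zero, smul_add, ← Nat.cast_smul_eq_nsmul B, smul_smul]
        push_cast
        congr 2
        rw [Nat.succ_eq_add_one]
        ring
      | zero => exact ⟨0, smul_zero _⟩
      | add a b _ _ ha hb =>
        obtain ⟨a', rfl⟩ := ha
        obtain ⟨b', rfl⟩ := hb
        exact ⟨a' + b', smul_add _ _ _⟩
      | smul c a _ ha =>
        obtain ⟨a', rfl⟩ := ha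
        exact ⟨c • a', smul_comm _ _ _⟩
  exact Algebra.Etale.of_formallyUnramified_of_flat

/-! ### The fixed ideal of a commuting endomorphism -/

/-- The ideal cutting out the locus where `φ` acts as the identity. -/
def fixedIdeal {B : Type*} [CommRing B] (φ : B →+* B) : Ideal B :=
  Ideal.span (Set.range fun x => φ x - x)

theorem map_mem_fixedIdeal {B : Type*} [CommRing B] (φ θ : B →+* B) (hcomm : θ.comp φ = φ.comp θ)
    {x : B} (hx : x ∈ fixedIdeal φ) : θ x ∈ fixedIdeal φ := by
  have hle : fixedIdeal φ ≤ (fixedIdeal φ).comap θ := by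
    refine Ideal.span_le.mpr ?_
    rintro _ ⟨x, rfl⟩
    have h1 : θ (φ x) = φ (θ x) := DFunLike.congr_fun hcomm x
    change θ (φ x - x) ∈ fixedIdeal φ
    rw [map_sub, h1]
    exact Ideal.subset_span ⟨θ x, rfl⟩
  exact hle hx

/-- The fixed ideal of an endomorphism `φ` commuting with the Frobenius lift `ψ` is stable under
the operation `c ↦ (ψ c - c ^ q) / q`. -/
theorem exists_delta_mem_fixedIdeal {B : Type*} [CommRing B] {q : ℕ} (hq : q.Prime)
    (ψ φ : B →+* B) (hcomm : ψ.comp φ = φ.comp ψ) (hψ : ∀ x, ∃ e, ψ x = x ^ q + q * e)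
    {c : B} (hc : c ∈ fixedIdeal φ) : ∃ d ∈ fixedIdeal φ, ψ c = c ^ q + q * d := by
  unfold fixedIdeal at hc
  induction hc using Submodule.span_induction with
  | mem c hc =>
    obtain ⟨x, rfl⟩ := hc
    obtain ⟨e, he⟩ := hψ x
    obtain ⟨r, hr⟩ := exists_add_pow_prime_eq hq x (φ x - x)
    have h1 : ψ (φ x) = φ x ^ q + q * φ e := by
      rw [show ψ (φ x) = φ (ψ x) from DFunLike.congr_fun hcomm x, he]
      simp
    rw [add_sub_cancel] at hr
    refine ⟨x * r * (φ x - x) + (φ e - e), add_mem (Ideal.mul_mem_left _ _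
      (Ideal.subset_span ⟨x, rfl⟩)) (Ideal.subset_span ⟨e, rfl⟩), ?_⟩
    simp only [map_sub]
    rw [h1, he]
    linear_combination hr
  | zero => exact ⟨0, zero_mem _, by simp [hq.ne_zero]⟩
  | add a b ha hb iha ihb =>
    obtain ⟨d, hd, hd'⟩ := iha
    obtain ⟨e, he, he'⟩ := ihb
    obtain ⟨r, hr⟩ := exists_add_pow_prime_eq hq a b
    refine ⟨d + e - b * r * a, sub_mem (add_mem hd he) (Ideal.mul_mem_left _ _ ha), ?_⟩
    rw [map_add, hd', he', hr]
    ring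
  | smul a c hc ih =>
    obtain ⟨d, hd, hd'⟩ := ih
    obtain ⟨e, he⟩ := hψ a
    refine ⟨a ^ q * d + e * ψ c, add_mem (Ideal.mul_mem_left _ _ hd) (Ideal.mul_mem_left _ _
      (map_mem_fixedIdeal φ ψ hcomm hc)), ?_⟩
    rw [smul_eq_mul, map_mul, mul_pow, he, add_mul]
    nth_rewrite 1 [hd']
    ring

/-- No nonzero integer lies in the fixed ideal of `φ` if that ideal is contained in an ideal
`𝔪 ≠ B` containing `q`: an integer `q * M` in it could be divided by `q`, because
`(ψ (q * M) - (q * M) ^ q) / q = M - M * (q * M) ^ (q - 1)`. -/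
theorem natCast_notMem_fixedIdeal {B : Type*} [CommRing B] [NoZeroSMulDivisors ℤ B]
    {q : ℕ} (hq : q.Prime)
    (ψ φ : B →+* B) (hcomm : ψ.comp φ = φ.comp ψ) (hψ : ∀ x, ∃ e, ψ x = x ^ q + q * e)
    {𝔪 : Ideal B} (h𝔪 : 𝔪 ≠ ⊤) (hq𝔪 : (q : B) ∈ 𝔪) (hle : fixedIdeal φ ≤ 𝔪)
    (N : ℕ) (hN : N ≠ 0) : (N : B) ∉ fixedIdeal φ := by
  induction N using Nat.strong_induction_on with
  | _ N ih =>
  intro hmem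
  by_cases hdvd : q ∣ N
  · obtain ⟨M, rfl⟩ := hdvd
    have hM : M ≠ 0 := right_ne_zero_of_mul hN
    refine ih M ?_ hM ?_
    · have := hq.two_le
      have := Nat.pos_of_ne_zero hM
      nlinarith
    obtain ⟨d, hd, hd'⟩ := exists_delta_mem_fixedIdeal hq ψ φ hcomm hψ hmem
    obtain ⟨k, rfl⟩ : ∃ k, q = k + 2 := Nat.exists_eq_add_of_le' hq.two_le
    rw [map_natCast] at hd'
    generalize hc : (((k + 2) * M : ℕ) : B) = c at hmem hd'
    have hc' : ((k + 2 : ℕ) : B) * M = c := by rw [← hc]; push_cast; ring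
    have h0 : ((k + 2 : ℕ) : ℤ) • ((M : B) - (M * c ^ k * c + d)) = 0 := by
      rw [zsmul_eq_mul, Int.cast_natCast]
      linear_combination hd' + (1 - c ^ k * c) * hc'
    have h1 := (smul_eq_zero.mp h0).resolve_left (by exact_mod_cast hq.ne_zero)
    rw [sub_eq_zero.mp h1]
    exact add_mem (Ideal.mul_mem_left _ _ hmem) hd
  · have hcop : IsCoprime (q : ℤ) (N : ℤ) :=
      Nat.isCoprime_iff_coprime.mpr ((Nat.Prime.coprime_iff_not_dvd hq).mpr hdvd)
    obtain ⟨a, b, hab⟩ := hcop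
    refine h𝔪 ((Ideal.eq_top_iff_one _).mpr ?_)
    have h1 : (a : B) * q + b * N = 1 := by exact_mod_cast congrArg (Int.cast : ℤ → B) hab
    rw [← h1]
    exact add_mem (Ideal.mul_mem_left _ _ hq𝔪) (Ideal.mul_mem_left _ _ (hle hmem))

/-- The saturation of an ideal: all elements with a nonzero integer multiple in the ideal. -/
def saturation {B : Type*} [CommRing B] (J : Ideal B) : Ideal B where
  carrier := {x | ∃ N : ℕ, N ≠ 0 ∧ (N : B) * x ∈ J}
  zero_mem' := ⟨1, one_ne_zero, by simp⟩
  add_mem' := by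
    rintro x y ⟨M, hM, hx⟩ ⟨N, hN, hy⟩
    refine ⟨M * N, mul_ne_zero hM hN, ?_⟩
    have : ((M * N : ℕ) : B) * (x + y) = N * (M * x) + M * (N * y) := by push_cast; ring
    rw [this]
    exact add_mem (Ideal.mul_mem_left _ _ hx) (Ideal.mul_mem_left _ _ hy)
  smul_mem' := by
    rintro c x ⟨M, hM, hx⟩
    refine ⟨M, hM, ?_⟩
    rw [smul_eq_mul, mul_left_comm]
    exact Ideal.mul_mem_left _ _ hx

theorem map_pow_eq_pow_add {B : Type*} [CommRing B] {q : ℕ}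
    (ψ : B →+* B) (hψ : ∀ x, ∃ e, ψ x = x ^ q + q * e) (n : ℕ) (x : B) :
    ∃ e, (ψ ^ n) x = x ^ q ^ n + q * e := by
  induction n with
  | zero => exact ⟨0, by simp⟩
  | succ n ih =>
    obtain ⟨e, he⟩ := ih
    obtain ⟨f, hf⟩ := hψ ((ψ ^ n) x)
    obtain ⟨g, hg⟩ := sub_dvd_pow_sub_pow ((ψ ^ n) x) (x ^ q ^ n) q
    refine ⟨e * g + f, ?_⟩
    rw [pow_succ' ψ, RingHom.mul_def, RingHom.comp_apply, hf, pow_succ q, pow_mul]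
    linear_combination hg + g * he

/-! ### Minimal `Λ`-rings -/

/-- A `Λ`-ring with no proper nonzero stable ideal having torsion-free quotient is étale: the
saturation of the ideal cutting out the locus `ψ q ^ n = 1` is stable and, for a suitable `n`,
proper, so it is zero; hence `ψ q ^ n = 1`, and `x = x ^ q ^ n` modulo `q`. -/
theorem etale_of_minimal {B : Type*} [CommRing B] [NoZeroSMulDivisors ℤ B]
    [Algebra.FiniteType ℤ B] (ψ : ℕ → B →+* B)
    (hcomm : ∀ p q : ℕ, p.Prime → q.Prime → (ψ p).comp (ψ q) = (ψ q).comp (ψ p))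
    (hfrob : ∀ p : ℕ, p.Prime → ∀ x : B, ∃ e, ψ p x = x ^ p + p * e)
    (hmin : ∀ J : Ideal B, J ≠ ⊤ → (∀ p : ℕ, p.Prime → ∀ x ∈ J, ψ p x ∈ J) →
      (∀ N : ℕ, N ≠ 0 → ∀ x : B, (N : B) * x ∈ J → x ∈ J) → J = ⊥) :
    Algebra.Etale ℤ B := by
  apply etale_of_pow_sub_mem
  intro 𝔪 h𝔪
  obtain ⟨q, hq, hq𝔪, n, hn, hx⟩ := exists_prime_mem_of_isMaximal 𝔪
  have hcom : ∀ p : ℕ, p.Prime → (ψ p).comp (ψ q ^ n) = (ψ q ^ n).comp (ψ p) := fun p hp =>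
    (show Commute (ψ p) (ψ q) from hcomm p q hp hq).pow_right n
  have hle : fixedIdeal (ψ q ^ n) ≤ 𝔪 := by
    refine Ideal.span_le.mpr ?_
    rintro _ ⟨x, rfl⟩
    obtain ⟨e, he⟩ := map_pow_eq_pow_add (ψ q) (hfrob q hq) n x
    have : (ψ q ^ n) x - x = (x ^ q ^ n - x) + e * q := by rw [he]; ring
    change (ψ q ^ n) x - x ∈ 𝔪
    rw [this]
    exact add_mem (hx x) (Ideal.mul_mem_left _ _ hq𝔪)
  have hbot : saturation (fixedIdeal (ψ q ^ n)) = ⊥ := by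
    apply hmin
    · rw [Ne, Ideal.eq_top_iff_one]
      rintro ⟨N, hN, hmem⟩
      rw [mul_one] at hmem
      exact natCast_notMem_fixedIdeal hq (ψ q) _ (hcom q hq) (hfrob q hq) h𝔪.ne_top hq𝔪 hle N hN hmem
    · rintro p hp x ⟨N, hN, hmem⟩
      refine ⟨N, hN, ?_⟩
      have := map_mem_fixedIdeal _ (ψ p) (hcom p hp) hmem
      rwa [map_mul, map_natCast] at this
    · rintro N hN x ⟨M, hM, hmem⟩
      refine ⟨M * N, mul_ne_zero hM hN, ?_⟩
      rwa [Nat.cast_mul, mul_assoc]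
  refine ⟨q, hq𝔪, n, hn, fun x => ?_⟩
  obtain ⟨e, he⟩ := map_pow_eq_pow_add (ψ q) (hfrob q hq) n x
  refine ⟨e, ?_⟩
  have hmem : (ψ q ^ n) x - x ∈ saturation (fixedIdeal (ψ q ^ n)) :=
    ⟨1, one_ne_zero, by rw [Nat.cast_one, one_mul]; exact Ideal.subset_span ⟨x, rfl⟩⟩
  rw [hbot, Ideal.mem_bot, sub_eq_zero] at hmem
  rw [← he, hmem]


/-- Let `A` be a nonzero commutative ring, torsion-free as a
`ℤ`-module and finitely generated as a `ℤ`-algebra, with a commuting family of Frobenius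
lifts `ψ p` indexed by the primes (a `Λ`-structure).  Then there is a proper ideal `I` of
`A`, stable under all the `ψ p`, such that `A ⧸ I` is étale over `ℤ`. -/
theorem stmt_13 (A : Type) [CommRing A] [Nontrivial A] [NoZeroSMulDivisors ℤ A]
    (hfg : Algebra.FiniteType ℤ A)
    (ψ : ℕ → A →+* A)
    (hcomm : ∀ p q : ℕ, p.Prime → q.Prime → (ψ p).comp (ψ q) = (ψ q).comp (ψ p))
    (hfrob : ∀ p : ℕ, p.Prime → ∀ x : A, ψ p x - x ^ p ∈ Ideal.span {(p : A)}) :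
    ∃ I : Ideal A, I ≠ ⊤ ∧ (∀ p : ℕ, p.Prime → ∀ x ∈ I, ψ p x ∈ I) ∧
      Algebra.Etale ℤ (A ⧸ I) := by
  -- The stable ideals with torsion-free nonzero quotient include the zero ideal; take a maximal one.
  let S : Set (Ideal A) := {J | J ≠ ⊤ ∧ (∀ p : ℕ, p.Prime → ∀ x ∈ J, ψ p x ∈ J) ∧
    ∀ N : ℕ, N ≠ 0 → ∀ x : A, (N : A) * x ∈ J → x ∈ J}
  have hnoeth : IsNoetherianRing A := Algebra.FiniteType.isNoetherianRing ℤ A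
  have hS : S.Nonempty := by
    refine ⟨⊥, bot_ne_top, fun p _ x hx => ?_, fun N hN x hx => ?_⟩
    · rw [Ideal.mem_bot] at hx ⊢
      rw [hx, map_zero]
    · rw [Ideal.mem_bot] at hx ⊢
      have h0 : (N : ℤ) • x = 0 := by rw [zsmul_eq_mul, Int.cast_natCast, hx]
      exact (smul_eq_zero.mp h0).resolve_left (by exact_mod_cast hN)
  obtain ⟨I, ⟨hI, hstab, hsat⟩, hmax⟩ : ∃ I : Ideal A, I ∈ S ∧ ∀ J ∈ S, ¬ I < J :=
    set_has_maximal_iff_noetherian.mpr hnoeth S hS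
  refine ⟨I, hI, hstab, ?_⟩
  have htf : NoZeroSMulDivisors ℤ (A ⧸ I) := by
    constructor
    intro c x hcx
    obtain ⟨x, rfl⟩ := Ideal.Quotient.mk_surjective x
    refine or_iff_not_imp_left.mpr fun hc => ?_
    rw [Ideal.Quotient.eq_zero_iff_mem]
    refine hsat c.natAbs (Int.natAbs_ne_zero.mpr hc) x ?_
    have h1 : (c : A) * x ∈ I := by
      rw [← Ideal.Quotient.eq_zero_iff_mem, ← zsmul_eq_mul, map_zsmul]
      exact hcx
    rcases Int.natAbs_eq c with h | h
    · rw [h, Int.cast_natCast] at h1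
      exact h1
    · rw [h, Int.cast_neg, Int.cast_natCast, neg_mul, neg_mem_iff] at h1
      exact h1
  let ψ' : ℕ → (A ⧸ I) →+* (A ⧸ I) := fun p =>
    if hp : p.Prime then Ideal.quotientMap I (ψ p) (hstab p hp) else RingHom.id _
  have hψ' : ∀ p : ℕ, p.Prime → ∀ x : A,
      ψ' p (Ideal.Quotient.mk I x) = Ideal.Quotient.mk I (ψ p x) := by
    intro p hp x
    simp only [ψ', dif_pos hp]
    exact Ideal.quotientMap_mk
  -- The algebra structure of a quotient over `ℤ` is the canonical one, but not by unfolding.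
  have halg : (inferInstance : Algebra ℤ (A ⧸ I)) = Ring.toIntAlgebra (A ⧸ I) :=
    Subsingleton.elim _ _
  have hft : Algebra.FiniteType ℤ (A ⧸ I) :=
    hfg.of_surjective (Ideal.Quotient.mkₐ ℤ I) (Ideal.Quotient.mkₐ_surjective ℤ I)
  dsimp only [inferInstance] at halg
  rw [halg] at hft ⊢
  refine etale_of_minimal ψ' ?_ ?_ ?_
  · intro p q hp hq
    refine Ideal.Quotient.ringHom_ext (RingHom.ext fun x => ?_)
    simp only [RingHom.comp_apply, hψ' p hp, hψ' q hq]
    exact congrArg _ (DFunLike.congr_fun (hcomm p q hp hq) x)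
  · intro p hp x
    obtain ⟨x, rfl⟩ := Ideal.Quotient.mk_surjective x
    obtain ⟨e, he⟩ := Ideal.mem_span_singleton'.mp (hfrob p hp x)
    refine ⟨Ideal.Quotient.mk I e, ?_⟩
    rw [hψ' p hp, ← map_natCast (Ideal.Quotient.mk I) p, ← map_mul, ← map_pow, ← map_add]
    congr 1
    linear_combination -he
  · intro J hJ hJstab hJsat
    -- The preimage of `J` in `A` again belongs to `S` and contains `I`, hence equals `I`.
    have hJS : J.comap (Ideal.Quotient.mk I) ∈ S := by
      refine ⟨Ideal.comap_ne_top _ hJ, fun p hp x hx => ?_, fun N hN x hx => ?_⟩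
      · rw [Ideal.mem_comap, ← hψ' p hp]
        exact hJstab p hp _ hx
      · refine hJsat N hN _ ?_
        rwa [Ideal.mem_comap, map_mul, map_natCast] at hx
    have hle : I ≤ J.comap (Ideal.Quotient.mk I) := fun x hx => by
      rw [Ideal.mem_comap, Ideal.Quotient.eq_zero_iff_mem.mpr hx]
      exact J.zero_mem
    have heq : I = J.comap (Ideal.Quotient.mk I) :=
      hle.eq_or_lt.resolve_right (hmax _ hJS)
    rw [eq_bot_iff]
    intro x hx
    obtain ⟨x, rfl⟩ := Ideal.Quotient.mk_surjective x
    rw [Ideal.mem_bot, Ideal.Quotient.eq_zero_iff_mem, heq]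
    exact hx
end

section
/- Let A be a nonzero commutative ring, torsion-free and finitely generated as a ℤ-module, equipped with a family (ψ_p) of pairwise commuting ring endomorphisms indexed by the primes p satisfying ψ_p(x) − x^p ∈ pA for all x ∈ A. Then there exists a ring homomorphism φ : A → ℤ such that φ ∘ ψ_p = φ for every prime p. -/
/-!
The `ψ p` act by precomposition on the finite nonempty set of ring homomorphisms `A →+* ℂ`. Let `T`
be a minimal nonempty subset stable under all of them. Since the `ψ p` commute, the image of `T`
under each is again stable, so by minimality every `ψ p` permutes `T`; some power `(ψ p)^k`, `k ≥ 1`,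
then fixes `T` pointwise. As `(ψ p)^k x ≡ x ^ (p ^ k)` modulo `p`, this gives
`f x ≡ (f x) ^ (p ^ k)` modulo `p` for all `f ∈ T` (`exists_pow_prime_pow_congr`).

Hence the order `C = f(A)`, for `f ∈ T`, satisfies `y ≡ y ^ (p ^ k)` modulo `p` for every prime `p`.
Differentiating, `Ω[C⁄ℤ]` is a divisible finitely generated abelian group, so it vanishes: `C` is
unramified over `ℤ` (`unramified_of_pow_prime_pow_congr`), and `C = ℤ` by the Hermite–Minkowski
theorem. Thus `f` comes from some `φ : A →+* ℤ`. Finally `φ` and `φ ∘ ψ p` agree modulo `p` by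
Fermat's little theorem, and the congruence above, whose error term is common to all of `T`,
bootstraps this to a congruence modulo every power of `p`.
-/

/-- A finitely generated abelian group divisible by every prime is trivial. -/
lemma subsingleton_of_forall_prime_divisible (M : Type*) [AddCommGroup M] [Module.Finite ℤ M]
    (h : ∀ p : ℕ, p.Prime → ∀ m : M, ∃ m' : M, m = (p : ℤ) • m') : Subsingleton M := by
  obtain ⟨r, hr, hr0⟩ := Submodule.exists_sub_one_mem_and_smul_eq_zero_of_fg_of_le_smul
    (Ideal.span {(2 : ℤ)}) (⊤ : Submodule ℤ M) Module.Finite.fg_top (by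
      intro m _
      obtain ⟨m', rfl⟩ := h 2 Nat.prime_two m
      exact Submodule.smul_mem_smul (Ideal.mem_span_singleton_self _) trivial)
  have hrne : r ≠ 0 := by
    rintro rfl
    rw [Ideal.mem_span_singleton] at hr
    omega
  have hdiv : ∀ n : ℕ, n ≠ 0 → ∀ m : M, ∃ m' : M, m = (n : ℤ) • m' := by
    intro n
    induction n using Nat.recOnMul with
    | zero => simp
    | one => exact fun _ m => ⟨m, by simp⟩
    | prime p hp => exact fun _ => h p hp
    | mul a b iha ihb =>
      intro hab m
      obtain ⟨m₁, rfl⟩ := iha (left_ne_zero_of_mul hab) m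
      obtain ⟨m₂, rfl⟩ := ihb (right_ne_zero_of_mul hab) m₁
      exact ⟨m₂, by rw [smul_smul]; push_cast; rfl⟩
  refine subsingleton_of_forall_eq 0 fun m => ?_
  obtain ⟨m', rfl⟩ := hdiv r.natAbs (Int.natAbs_ne_zero.mpr hrne) m
  rcases Int.natAbs_eq r with h1 | h1
  · rw [← h1]; exact hr0 m' trivial
  · have := hr0 m' trivial
    rw [h1, neg_smul, neg_eq_zero] at this
    exact this

/-- If some iterate of Frobenius is the identity on `C / pC` for every prime `p`, then `C` is
unramified over `ℤ`: differentiating `x = x ^ (p ^ k) + p * y` shows that `d x` is divisible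
by `p` in `Ω[C⁄ℤ]`. -/
lemma unramified_of_pow_prime_pow_congr (C : Type*) [CommRing C] [Module.Finite ℤ C]
    (h : ∀ p : ℕ, p.Prime → ∃ k : ℕ, 0 < k ∧ ∀ x : C, ∃ y : C, x = x ^ (p ^ k) + p * y) :
    Algebra.Unramified ℤ C := by
  have : Module.Finite ℤ (Ω[C⁄ℤ]) := Module.Finite.trans C _
  have : Subsingleton (Ω[C⁄ℤ]) := by
    refine subsingleton_of_forall_prime_divisible _ fun p hp m => ?_
    have hm : m ∈ Submodule.span C (Set.range (KaehlerDifferential.D ℤ C)) := by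
      rw [KaehlerDifferential.span_range_derivation]; trivial
    induction hm using Submodule.span_induction with
    | mem m hm =>
      obtain ⟨x, rfl⟩ := hm
      obtain ⟨k, hk, hx⟩ := h p hp
      obtain ⟨y, hy⟩ := hx x
      obtain ⟨j, rfl⟩ := Nat.exists_eq_succ_of_ne_zero hk.ne'
      -- With `k = j + 1`, the term `p ^ k • x ^ (p ^ k - 1) • d x + p • d y` is `p` times this.
      refine ⟨(p ^ j : ℕ) • x ^ (p ^ (j + 1) - 1) • KaehlerDifferential.D ℤ C x
        + KaehlerDifferential.D ℤ C y, ?_⟩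
      have h1 := congrArg (KaehlerDifferential.D ℤ C) hy
      rw [map_add, Derivation.leibniz_pow, Derivation.leibniz, Derivation.map_natCast,
        smul_zero, add_zero] at h1
      refine h1.trans ?_
      rw [smul_add, Nat.succ_eq_add_one, natCast_zsmul, natCast_zsmul, smul_smul p,
        Nat.cast_smul_eq_nsmul, pow_succ' p j]
    | zero => exact ⟨0, by simp⟩
    | add a b _ _ ha hb =>
      obtain ⟨a', rfl⟩ := ha
      obtain ⟨b', rfl⟩ := hb
      exact ⟨a' + b', by rw [smul_add]⟩
    | smul c a _ ha =>
      obtain ⟨a', rfl⟩ := ha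
      exact ⟨c • a', smul_comm _ _ _⟩
  have : Algebra.FormallyUnramified ℤ C := ⟨this⟩
  exact {}

/-- A prime `P` of `A` lying over `(0)` yields a domain `A ⧸ P` algebraic over `ℤ`, which maps
to `ℂ`. -/
lemma nonempty_ringHom_complex (A : Type*) [CommRing A] [Nontrivial A]
    [NoZeroSMulDivisors ℤ A] [Module.Finite ℤ A] : Nonempty (A →+* ℂ) := by
  have hinj : Function.Injective (algebraMap ℤ A) := FaithfulSMul.algebraMap_injective ℤ A
  obtain ⟨P, -, hP, hP0⟩ := Ideal.exists_ideal_over_prime_of_isIntegral (⊥ : Ideal ℤ) (⊥ : Ideal A)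
    (by intro x hx; exact hinj (by simpa using hx))
  have hqinj : Function.Injective (algebraMap ℤ (A ⧸ P)) := by
    rw [injective_iff_map_eq_zero]
    intro n hn
    rw [IsScalarTower.algebraMap_apply ℤ A (A ⧸ P), Ideal.Quotient.algebraMap_eq,
      Ideal.Quotient.eq_zero_iff_mem] at hn
    have : n ∈ P.comap (algebraMap ℤ A) := hn
    rwa [hP0] at this
  have : FaithfulSMul ℤ (A ⧸ P) := (faithfulSMul_iff_algebraMap_injective ℤ (A ⧸ P)).mpr hqinj
  have : Algebra.IsIntegral ℤ (A ⧸ P) := inferInstance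
  let g : (A ⧸ P) →ₐ[ℤ] ℂ := IsAlgClosed.lift
  exact ⟨(g : (A ⧸ P) →+* ℂ).comp (Ideal.Quotient.mk P)⟩

/-- The `k`-th iterate of a lift of the `p`-th power map lifts the `p ^ k`-th power map. -/
lemma iterate_sub_pow_mem {A : Type*} [CommRing A] (I : Ideal A) (p : ℕ) (ψ : A →+* A)
    (h : ∀ x, ψ x - x ^ p ∈ I) (k : ℕ) (x : A) : ψ^[k] x - x ^ (p ^ k) ∈ I := by
  induction k generalizing x with
  | zero => simp
  | succ k ih =>
    have h1 := ih (ψ x)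
    rw [← Ideal.Quotient.eq] at h1 ⊢
    rw [Function.iterate_succ_apply, h1, map_pow, Ideal.Quotient.eq.mpr (h x), map_pow, ← pow_mul,
      map_pow, pow_succ']

/-- A Frobenius lift at `p` permuting a finite set `T` of complex points gives a relation
`x = x ^ (p ^ k) + p * y` holding at all points of `T`, with the same `y`. -/
lemma exists_pow_prime_pow_congr {A : Type*} [CommRing A] (p : ℕ) (ψ : A →+* A)
    (hfrob : ∀ x : A, ψ x - x ^ p ∈ Ideal.span {(p : A)}) (T : Set (A →+* ℂ)) (hfin : T.Finite)
    (hT : (fun f : A →+* ℂ => f.comp ψ) '' T = T) :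
    ∃ k : ℕ, 0 < k ∧ ∀ x : A, ∃ y : A, ∀ f ∈ T, f x = f x ^ (p ^ k) + p * f y := by
  have : Finite T := hfin
  have hmaps : ∀ f ∈ T, f.comp ψ ∈ T := fun f hf => hT ▸ Set.mem_image_of_mem _ hf
  let s : T → T := fun f => ⟨f.1.comp ψ, hmaps _ f.2⟩
  have hs : Function.Surjective s := by
    rintro ⟨f, hf⟩
    rw [← hT] at hf
    obtain ⟨g, hg, rfl⟩ := hf
    exact ⟨⟨g, hg⟩, rfl⟩
  let σ : Equiv.Perm T := Equiv.ofBijective s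
    (Finite.surjective_iff_bijective.mp hs)
  have hiter : ∀ (n : ℕ) (f : T) (x : A), (s^[n] f).1 x = f.1 (ψ^[n] x) := by
    intro n
    induction n with
    | zero => simp
    | succ n ih =>
      intro f x
      rw [Function.iterate_succ_apply, ih, Function.iterate_succ_apply']
      rfl
  refine ⟨orderOf σ, orderOf_pos σ, fun x => ?_⟩
  obtain ⟨y, hy⟩ := Ideal.mem_span_singleton'.mp
    (iterate_sub_pow_mem (Ideal.span {(p : A)}) p ψ hfrob (orderOf σ) x)
  refine ⟨y, fun f hf => ?_⟩
  have h1 : s^[orderOf σ] ⟨f, hf⟩ = ⟨f, hf⟩ := by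
    have h2 : (σ ^ orderOf σ) ⟨f, hf⟩ = ⟨f, hf⟩ := by rw [pow_orderOf_eq_one]; rfl
    rwa [Equiv.Perm.coe_pow] at h2
  have h3 := hiter (orderOf σ) ⟨f, hf⟩ x
  rw [h1] at h3
  refine h3.trans ?_
  rw [← sub_eq_iff_eq_add', ← map_pow, ← map_sub, ← hy, map_mul, map_natCast, mul_comm]

/-- Two integral points which agree modulo `p`, and satisfy a common relation
`x = x ^ m + p * y` with `m ≥ 2`, coincide: if `φ x = 0` then `φ y = 0`, so divisibility of `χ` by
`p ^ n` on the kernel of `φ` improves to divisibility by `p ^ (n + 1)`. -/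
lemma eq_of_congr_of_pow_congr {A : Type*} [CommRing A] (φ χ : A →+* ℤ) (p m : ℕ)
    (hp : p.Prime) (hm : 2 ≤ m) (hcong : ∀ x, (p : ℤ) ∣ χ x - φ x)
    (h : ∀ x : A, ∃ y : A, φ x = φ x ^ m + p * φ y ∧ χ x = χ x ^ m + p * χ y) : χ = φ := by
  have hp0 : (p : ℤ) ≠ 0 := by exact_mod_cast hp.ne_zero
  have key : ∀ n : ℕ, ∀ x : A, φ x = 0 → (p : ℤ) ^ (n + 1) ∣ χ x := by
    intro n
    induction n with
    | zero => intro x hx; simpa [hx] using hcong x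
    | succ n ih =>
      intro x hx
      obtain ⟨y, hy1, hy2⟩ := h x
      have hy0 : φ y = 0 := by
        rw [hx, zero_pow (by omega), zero_add] at hy1
        exact (mul_eq_zero.mp hy1.symm).resolve_left hp0
      rw [hy2]
      refine dvd_add ?_ ?_
      · calc (p : ℤ) ^ (n + 1 + 1) ∣ ((p : ℤ) ^ (n + 1)) ^ 2 := by
              rw [← pow_mul]; exact pow_dvd_pow _ (by omega)
          _ ∣ χ x ^ 2 := pow_dvd_pow_of_dvd (ih x hx) 2
          _ ∣ χ x ^ m := pow_dvd_pow _ hm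
      · rw [pow_succ']
        exact mul_dvd_mul_left _ (ih y hy0)
  -- Every `x` differs from the constant `φ x` by an element of the kernel of `φ`.
  ext x
  have hx : φ (x - (φ x : A)) = 0 := by simp
  have h0 : χ (x - (φ x : A)) = 0 := by
    by_contra hne
    obtain ⟨n, hn⟩ : FiniteMultiplicity (p : ℤ) (χ (x - (φ x : A))) :=
      Int.finiteMultiplicity_iff.mpr ⟨by simpa using hp.ne_one, hne⟩
    exact hn (key n _ hx)
  rw [map_sub, map_intCast, sub_eq_zero] at h0
  simpa using h0

/-- Let `A` be a nonzero commutative ring, torsion-free and finitely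
generated as a `ℤ`-module, with a commuting family of Frobenius lifts `ψ p` indexed by
the primes (a `Λ`-structure).  Then there is a ring homomorphism `φ : A → ℤ` with
`φ ∘ ψ p = φ` for all primes `p` (an `F₁`-valued point). -/
theorem stmt_15 (A : Type) [CommRing A] [Nontrivial A] [NoZeroSMulDivisors ℤ A]
    [Module.Finite ℤ A]
    (ψ : ℕ → A →+* A)
    (hcomm : ∀ p q : ℕ, p.Prime → q.Prime → (ψ p).comp (ψ q) = (ψ q).comp (ψ p))
    (hfrob : ∀ p : ℕ, p.Prime → ∀ x : A, ψ p x - x ^ p ∈ Ideal.span {(p : A)}) :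
    ∃ φ : A →+* ℤ, ∀ p : ℕ, p.Prime → φ.comp (ψ p) = φ := by
  have : Finite (A →+* ℂ) :=
    Finite.of_injective (fun f : A →+* ℂ => f.toIntAlgHom) (by
      intro f g hfg
      ext x
      exact DFunLike.congr_fun hfg x)
  obtain ⟨f₀⟩ := nonempty_ringHom_complex A
  let stable : Set (Set (A →+* ℂ)) :=
    {T | T.Nonempty ∧ ∀ p : ℕ, p.Prime → ∀ f ∈ T, f.comp (ψ p) ∈ T}
  obtain ⟨T, hTmin⟩ := (Set.toFinite stable).exists_minimal
    ⟨Set.univ, ⟨f₀, trivial⟩, fun _ _ _ _ => trivial⟩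
  obtain ⟨⟨f, hf⟩, hTs⟩ := hTmin.prop
  have himage : ∀ p : ℕ, p.Prime → (fun g : A →+* ℂ => g.comp (ψ p)) '' T = T := by
    intro p hp
    have hsub : (fun g : A →+* ℂ => g.comp (ψ p)) '' T ⊆ T := by
      rintro _ ⟨g, hg, rfl⟩
      exact hTs p hp g hg
    -- The image is again stable because the `ψ q` commute with `ψ p`.
    refine hsub.antisymm (hTmin.le_of_le ⟨⟨_, f, hf, rfl⟩, ?_⟩ hsub)
    rintro q hq _ ⟨g, hg, rfl⟩
    exact ⟨g.comp (ψ q), hTs q hq g hg, by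
      simp only [RingHom.comp_assoc, hcomm p q hp hq]⟩
  have hcongr := fun p (hp : p.Prime) => exists_pow_prime_pow_congr p (ψ p) (hfrob p hp) T
    (Set.toFinite T) (himage p hp)
  have : Module.Finite ℤ f.range :=
    Module.Finite.of_surjective f.rangeRestrict.toIntAlgHom.toLinearMap f.rangeRestrict_surjective
  have : Algebra.Unramified ℤ f.range := by
    refine unramified_of_pow_prime_pow_congr _ fun p hp => ?_
    obtain ⟨k, hk, h⟩ := hcongr p hp
    refine ⟨k, hk, ?_⟩
    rintro ⟨_, x, rfl⟩
    obtain ⟨y, hy⟩ := h x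
    exact ⟨f.rangeRestrict y, Subtype.ext (by simpa using hy f hf)⟩
  let e : ℤ ≃+* f.range := RingEquiv.ofBijective (algebraMap ℤ f.range)
    bijective_algebraMap_int_of_finite_of_unramified
  let φ : A →+* ℤ := (e.symm : f.range →+* ℤ).comp f.rangeRestrict
  have hφ : ∀ x, ((φ x : ℤ) : ℂ) = f x := by
    intro x
    have h1 : e (φ x) = f.rangeRestrict x := e.apply_symm_apply _
    have h2 := congrArg Subtype.val h1
    simpa [e] using h2
  refine ⟨φ, fun p hp => ?_⟩
  obtain ⟨k, hk, h⟩ := hcongr p hp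
  refine eq_of_congr_of_pow_congr φ (φ.comp (ψ p)) p (p ^ k) hp
    (hp.two_le.trans (Nat.le_self_pow hk.ne' p)) (fun x => ?_) fun x => ?_
  · obtain ⟨y, hy⟩ := Ideal.mem_span_singleton'.mp (hfrob p hp x)
    have h1 : φ (ψ p x) - φ x ^ p = φ y * p := by
      rw [← map_pow, ← map_sub, ← hy, map_mul, map_natCast]
    have : Fact p.Prime := ⟨hp⟩
    have h2 : (p : ℤ) ∣ φ x ^ p - φ x := by
      rw [← ZMod.intCast_zmod_eq_zero_iff_dvd]
      simp [ZMod.pow_card]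
    have h3 : (p : ℤ) ∣ φ (ψ p x) - φ x ^ p := h1 ▸ dvd_mul_left _ _
    simpa using dvd_add h3 h2
  · obtain ⟨y, hy⟩ := h x
    refine ⟨y, ?_, ?_⟩
    · have := hy f hf
      simp only [← hφ] at this
      exact_mod_cast this
    · have := hy _ (hTs p hp f hf)
      simp only [RingHom.comp_apply, ← hφ] at this
      exact_mod_cast this
end

section
/- Let k be a finite field of cardinality q, let R be a commutative k-algebra which is an integral domain, and let B be a nonzero commutative R-algebra such that the image in B of every nonzero element of R is a nonzerodivisor. Let Φ : R ⊗_k B → ∏_{m∈ℕ} B be the k-algebra homomorphism determined on pure tensors by Φ(a ⊗ b) = (algebraMap(a) · b^(q^m))_{m∈ℕ}. Then every element of the kernel of Φ is nilpotent. -/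
open scoped TensorProduct

/-!
Write an element of the kernel as `∑ aᵢ ⊗ bᵢ` with `a₁, …, aₙ` linearly independent over `k`.
Then `∑ aᵢ bᵢ ^ (q ^ m) = 0` for all `m`, and raising the equation for `m = n - j` to the power
`q ^ j` gives `∑ aᵢ ^ (q ^ j) cᵢ = 0` for `j < n`, where `cᵢ = bᵢ ^ (q ^ n)`: the vector `c` is
killed by the Moore matrix `(aᵢ ^ (q ^ j))`. The determinant of this matrix is nonzero
(`moore_det_ne_zero`), because a relation `v` between its rows would make the polynomial
`∑ vⱼ X ^ (q ^ j)`, of degree less than `q ^ n`, vanish on the `q ^ n` elements of the `k`-span of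
the `aᵢ`. So the determinant is a nonzerodivisor in `B`, which forces `c = 0`; hence every `bᵢ` is
nilpotent.
-/

/-- The `q ^ j`-power map on a commutative algebra over the field with `q` elements is an algebra
homomorphism. -/
lemma exists_algHom_pow_card (k : Type) [Field k] [Fintype k] (A : Type) [CommRing A]
    [Algebra k A] (j : ℕ) : ∃ f : A →ₐ[k] A, ∀ x, f x = x ^ Fintype.card k ^ j := by
  induction j with
  | zero => exact ⟨AlgHom.id k A, by simp⟩
  | succ j ih =>
    obtain ⟨f, hf⟩ := ih
    exact ⟨(FiniteField.frobeniusAlgHom k A).comp f, fun x => by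
      simp [hf, pow_succ, pow_mul]⟩

/-- The Moore determinant of elements of a domain that are linearly independent over a finite
field does not vanish. -/
lemma moore_det_ne_zero (k : Type) [Field k] [Fintype k] {R : Type} [CommRing R] [IsDomain R]
    [Algebra k R] {n : ℕ} {a : Fin n → R} (ha : LinearIndependent k a) :
    (Matrix.of fun j i : Fin n => a i ^ Fintype.card k ^ (j : ℕ)).det ≠ 0 := by
  intro hdet
  obtain ⟨v, hv, hvM⟩ := Matrix.exists_vecMul_eq_zero_iff.mpr hdet
  have hq : 1 < Fintype.card k := Fintype.one_lt_card
  set q := Fintype.card k with hqdef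
  let P : Polynomial R := ∑ j : Fin n, Polynomial.C (v j) * Polynomial.X ^ q ^ (j : ℕ)
  have hdeg : P.natDegree < Fintype.card (Fin n → k) := by
    rw [Fintype.card_fun, Fintype.card_fin, ← hqdef]
    have hpos : 0 < q ^ n := pow_pos (by omega) n
    have : P.natDegree ≤ q ^ n - 1 := by
      refine Polynomial.natDegree_sum_le_of_forall_le _ _ fun j _ => ?_
      refine (Polynomial.natDegree_C_mul_X_pow_le _ _).trans ?_
      have := Nat.pow_lt_pow_right hq j.isLt
      omega
    omega
  have hP : P = 0 := by
    refine Polynomial.eq_zero_of_natDegree_lt_card_of_eval_eq_zero P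
      (linearIndependent_iff_injective_fintypeLinearCombination.mp ha) (fun w => ?_) hdeg
    have hrow (i : Fin n) : ∑ j : Fin n, v j * a i ^ q ^ (j : ℕ) = 0 := congrFun hvM i
    have hpow (j : Fin n) : (∑ i, w i • a i) ^ q ^ (j : ℕ) = ∑ i, w i • a i ^ q ^ (j : ℕ) := by
      obtain ⟨f, hf⟩ := exists_algHom_pow_card k R j
      rw [← hf, map_sum]
      exact Finset.sum_congr rfl fun i _ => by rw [map_smul, hf]
    simp only [P, Polynomial.eval_finsetSum, Polynomial.eval_mul, Polynomial.eval_C,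
      Polynomial.eval_pow, Polynomial.eval_X, Fintype.linearCombination_apply, hpow,
      Finset.mul_sum, mul_smul_comm]
    rw [Finset.sum_comm]
    exact Finset.sum_eq_zero fun i _ => by rw [← Finset.smul_sum, hrow, smul_zero]
  refine hv (funext fun j => ?_)
  have hcoeff := congrArg (fun p => Polynomial.coeff p (q ^ (j : ℕ))) hP
  simpa [P, Polynomial.coeff_X_pow, Nat.pow_right_inj hq, Fin.val_inj] using hcoeff

/-- The case of a tensor `∑ aᵢ ⊗ bᵢ` in the kernel whose left factors are linearly independent. -/
lemma isNilpotent_of_sum_eq_zero (k : Type) [Field k] [Fintype k] {R : Type} [CommRing R]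
    [IsDomain R] [Algebra k R] {B : Type} [CommRing B] [Algebra k B] [Algebra R B]
    (hreg : ∀ r : R, r ≠ 0 → algebraMap R B r ∈ nonZeroDivisors B)
    {n : ℕ} {a : Fin n → R} (ha : LinearIndependent k a) (b : Fin n → B)
    (h : ∀ m : ℕ, ∑ i, algebraMap R B (a i) * b i ^ Fintype.card k ^ m = 0) (i : Fin n) :
    IsNilpotent (b i) := by
  set q := Fintype.card k with hqdef
  let M : Matrix (Fin n) (Fin n) R := Matrix.of fun j i => a i ^ q ^ (j : ℕ)
  let N : Matrix (Fin n) (Fin n) B := (algebraMap R B).mapMatrix M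
  have hN : N.det ∈ nonZeroDivisors B := by
    rw [← RingHom.map_det]
    exact hreg _ (moore_det_ne_zero k ha)
  have hNc : N.mulVec (fun i => b i ^ q ^ n) = 0 := by
    funext j
    obtain ⟨f, hf⟩ := exists_algHom_pow_card k B j
    have hj := congrArg f (h (n - j))
    rw [map_sum, map_zero] at hj
    refine Eq.trans (b := ∑ i, f (algebraMap R B (a i) * b i ^ q ^ (n - (j : ℕ)))) ?_ hj
    rw [Matrix.mulVec_eq_sum, Finset.sum_apply]
    refine Finset.sum_congr rfl fun i _ => ?_
    rw [hf, mul_pow, ← pow_mul, ← hqdef, ← pow_add, Nat.sub_add_cancel j.isLt.le]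
    simp [N, M, mul_comm]
  have hdet := congrArg N.adjugate.mulVec hNc
  rw [Matrix.mulVec_mulVec, Matrix.adjugate_mul, Matrix.smul_mulVec, Matrix.one_mulVec,
    Matrix.mulVec_zero] at hdet
  exact ⟨q ^ n, (mul_left_mem_nonZeroDivisors_eq_zero_iff hN).mp (congrFun hdet i)⟩



/-- Let `k` be a finite field of cardinality `q`, `R` a commutative
`k`-algebra which is a domain, and `B` a nonzero commutative `R`-algebra in which the
image of every nonzero element of `R` is a nonzerodivisor.  Let
`Φ : R ⊗[k] B → ∏_{m ∈ ℕ} B` be the `k`-algebra homomorphism with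
`Φ (a ⊗ b) = (a · b ^ (q ^ m))_m`.  Then every element of the kernel of `Φ` is
nilpotent. -/
theorem stmt_17 (k : Type) [Field k] [Fintype k] (q : ℕ) (hq : Fintype.card k = q)
    (R : Type) [CommRing R] [IsDomain R] [Algebra k R]
    (B : Type) [CommRing B] [Nontrivial B] [Algebra k B] [Algebra R B]
    [IsScalarTower k R B]
    (hreg : ∀ r : R, r ≠ 0 → algebraMap R B r ∈ nonZeroDivisors B)
    (Φ : (R ⊗[k] B) →ₐ[k] (ℕ → B))
    (hΦ : ∀ (a : R) (b : B), Φ (a ⊗ₜ[k] b) = fun m => algebraMap R B a * b ^ q ^ m) :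
    ∀ x ∈ RingHom.ker Φ, IsNilpotent x := by
  intro x hx
  subst hq
  let e := Module.Basis.ofVectorSpace k R
  obtain ⟨c, rfl⟩ := TensorProduct.eq_repr_basis_left e x
  let s := c.support.equivFin.symm
  have hsum {A : Type} [AddCommMonoid A] (g : Module.Basis.ofVectorSpaceIndex k R → A) :
      ∑ i ∈ c.support, g i = ∑ j, g (s j) := by
    rw [← Finset.sum_coe_sort, ← s.sum_comp]
  have hli : LinearIndependent k fun j => e (s j) :=
    e.linearIndependent.comp _ (Subtype.val_injective.comp s.injective)
  have hnil := isNilpotent_of_sum_eq_zero k hreg hli (fun j => c (s j)) fun m => by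
    have hm := congrFun (RingHom.mem_ker.mp hx) m
    simpa [Finsupp.sum, hsum, hΦ] using hm
  rw [Finsupp.sum, hsum]
  refine isNilpotent_sum fun j _ => ?_
  obtain ⟨N, hN⟩ := hnil j
  exact ⟨N, by rw [Algebra.TensorProduct.tmul_pow, hN, TensorProduct.tmul_zero]⟩
end
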